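/- (Main theorem.) There exist a constant c > 0 and an integer n₀ such that for every n ≥ n₀ there is a pair (A_n, B_n) of legal positions of n×n chess with the following two properties: (1) there exists a legal sequence of chess moves leading from A_n to B_n; (2) every legal sequence of chess moves leading from A_n to B_n has length at least e^{c·n}. In other words, the minimum number of legal moves required to get from A_n to B_n is exponential in n, and hence the diameter of n×n chess grows at least exponentially in n. -/

import Mathlib

/-!
`n × n` chess: the natural generalization of chess to an `n × n` board.
Pieces are kings, queens, rooks, bishops, knights and pawns of two colors,
moving and capturing exactly as in ordinary chess (rooks, bishops and queens
move any number of squares along their lines over empty squares; pawns move one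
square forward and capture one square diagonally forward); a position specifies
the placement of the pieces and the side to move; White and Black alternate
moves; a move is legal if it follows the movement rules and does not leave the
mover's own king under attack.  There is no fifty-move rule and no
draw-by-repetition rule, so games of arbitrary length are permitted.

A square is a pair `(file, rank) : Fin n × Fin n`; White pawns move towards
increasing rank, Black pawns towards decreasing rank.
-/

namespace Chess

inductive Color : Type
  | white : Color
  | black : Color
deriving DecidableEq

/-- The opposite color. -/
def Color.other : Color → Color
  | .white => .black
  | .black => .white

inductive Piece : Type
  | king | queen | rook | bishop | knight | pawn
deriving DecidableEq

/-- A square of the `n × n` board: `(file, rank)`. -/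
abbrev Sq (n : ℕ) := Fin n × Fin n

/-- A board assigns to each square either nothing or a colored piece. -/
abbrev Board (n : ℕ) := Sq n → Option (Color × Piece)

/-- A position: the placement of the pieces together with the side to move. -/
structure Position (n : ℕ) where
  board : Board n
  toMove : Color

/-- File of a square, as an integer. -/
def X {n : ℕ} (s : Sq n) : ℤ := s.1.val
/-- Rank of a square, as an integer. -/
def Y {n : ℕ} (s : Sq n) : ℤ := s.2.val

/-- `u` lies strictly between `s` and `t` on the (horizontal, vertical or
diagonal) line segment from `s` to `t`. -/
def StrictBtw {n : ℕ} (s t u : Sq n) : Prop :=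
  (X u - X s) * (Y t - Y s) = (Y u - Y s) * (X t - X s) ∧
  u ≠ s ∧ u ≠ t ∧
  min (X s) (X t) ≤ X u ∧ X u ≤ max (X s) (X t) ∧
  min (Y s) (Y t) ≤ Y u ∧ Y u ≤ max (Y s) (Y t)

/-- All squares strictly between `s` and `t` are empty. -/
def Clear {n : ℕ} (b : Board n) (s t : Sq n) : Prop :=
  ∀ u : Sq n, StrictBtw s t u → b u = none

/-- A king step: to an adjacent square. -/
def KingStep {n : ℕ} (s t : Sq n) : Prop :=
  s ≠ t ∧ |X t - X s| ≤ 1 ∧ |Y t - Y s| ≤ 1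

/-- A knight step. -/
def KnightStep {n : ℕ} (s t : Sq n) : Prop :=
  (|X t - X s| = 1 ∧ |Y t - Y s| = 2) ∨ (|X t - X s| = 2 ∧ |Y t - Y s| = 1)

/-- `s` and `t` are distinct squares of one rank or one file. -/
def RookLine {n : ℕ} (s t : Sq n) : Prop :=
  s ≠ t ∧ (X s = X t ∨ Y s = Y t)

/-- `s` and `t` are distinct squares of one diagonal. -/
def BishopLine {n : ℕ} (s t : Sq n) : Prop :=
  s ≠ t ∧ |X t - X s| = |Y t - Y s|

/-- The rank direction in which pawns of color `c` move. -/
def forward : Color → ℤ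
  | .white => 1
  | .black => -1

/-- A piece `p` of color `c` standing on `s` attacks the square `t` on the
board `b`: kings, knights and pawns by their step patterns (pawns attack one
square diagonally forward), and rooks, bishops and queens along their lines,
provided all intermediate squares are empty. -/
def AttacksFrom {n : ℕ} (b : Board n) (c : Color) (p : Piece) (s t : Sq n) : Prop :=
  match p with
  | .king => KingStep s t
  | .knight => KnightStep s t
  | .rook => RookLine s t ∧ Clear b s t
  | .bishop => BishopLine s t ∧ Clear b s t
  | .queen => (RookLine s t ∨ BishopLine s t) ∧ Clear b s t
  | .pawn => |X t - X s| = 1 ∧ Y t - Y s = forward c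

/-- The king of color `c` is attacked by some piece of the other color. -/
def InCheck {n : ℕ} (b : Board n) (c : Color) : Prop :=
  ∃ (ks s : Sq n) (p : Piece),
    b ks = some (c, Piece.king) ∧ b s = some (c.other, p) ∧
    AttacksFrom b c.other p s ks

/-- The movement rule for a piece `p` of color `c` from `s` to `t` on board
`b`: a pawn moves one square straight forward to an empty square or captures
one square diagonally forward; every other piece moves exactly along its attack
pattern. -/
def MovePattern {n : ℕ} (b : Board n) (c : Color) (p : Piece) (s t : Sq n) : Prop :=
  match p with
  | .pawn =>
      (X t = X s ∧ Y t - Y s = forward c ∧ b t = none) ∨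
      (|X t - X s| = 1 ∧ Y t - Y s = forward c ∧ ∃ q : Piece, b t = some (c.other, q))
  | _ => AttacksFrom b c p s t

/-- The board after the piece on `s` moves to `t` (capturing whatever stood
on `t`). -/
def boardAfter {n : ℕ} (b : Board n) (s t : Sq n) : Board n :=
  fun u => if u = t then b s else if u = s then none else b u

/-- `LegalMove P Q`: the position `Q` arises from the position `P` by a single
legal move: the side to move moves one of its pieces according to the movement
rules to a square not occupied by its own piece, the side to move alternates,
and the mover's own king is not left under attack. -/
def LegalMove {n : ℕ} (P Q : Position n) : Prop :=
  ∃ (s t : Sq n) (p : Piece),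
    P.board s = some (P.toMove, p) ∧
    (∀ q : Piece, P.board t ≠ some (P.toMove, q)) ∧
    MovePattern P.board P.toMove p s t ∧
    Q.board = boardAfter P.board s t ∧
    Q.toMove = P.toMove.other ∧
    ¬ InCheck Q.board P.toMove

/-- A (statically) legal position: each side has exactly one king, the side
which has just moved is not in check, and no pawn stands on the first or the
last rank. -/
def LegalPos {n : ℕ} (P : Position n) : Prop :=
  (∀ c : Color, ∃! s : Sq n, P.board s = some (c, Piece.king)) ∧
  ¬ InCheck P.board P.toMove.other ∧
  ∀ (s : Sq n) (c : Color), P.board s = some (c, Piece.pawn) →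
    (s.2 : ℕ) ≠ 0 ∧ (s.2 : ℕ) ≠ n - 1

/-- `Steps N A B`: there is a legal sequence of exactly `N` chess moves leading
from the position `A` to the position `B`. -/
def Steps {n : ℕ} : ℕ → Position n → Position n → Prop
  | 0, A, B => A = B
  | (N + 1), A, B => ∃ C : Position n, LegalMove A C ∧ Steps N C B

end Chess


namespace Strip

def tFull : List (ℕ × ℕ) :=
  [(98,3), (104,1), (134,2), (137,2), (146,3), (152,1), (290,2), (296,0), (386,3), (392,1),
   (518,1), (521,1), (530,2), (536,0), (578,2), (584,0)]

def tHole : List (ℕ × ℕ) :=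
  [(107,3), (110,3), (155,3), (158,3), (182,3), (185,3), (230,3), (233,3), (299,2), (302,2),
   (395,3), (398,3), (434,4), (440,2), (482,4), (488,2), (539,2), (542,2), (566,2), (569,2),
   (587,2), (590,2), (626,3), (632,1), (710,2), (713,2), (728,2), (806,2), (809,2), (866,3),
   (872,1), (902,3), (905,3), (914,3), (3170,3), (3176,1), (3206,2), (3209,2), (3218,3), (3224,1),
   (3362,2), (3368,0), (3458,3), (3464,1), (3590,1), (3593,1), (3602,2), (3608,0), (3650,2),
   (3656,0), (12326,3), (12329,3), (12422,3), (12425,3), (12578,4), (12584,2), (12674,4),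
   (12680,2), (12806,2), (12809,2), (12824,2), (12866,3), (12872,1), (49190,3), (49193,3),
   (49286,3), (49289,3), (49442,4), (49448,2), (49538,4), (49544,2), (49670,2), (49673,2),
   (49688,2), (49730,3), (49736,1), (196646,3), (196649,3), (196742,3), (196745,3), (196898,4),
   (196904,2), (196994,4), (197000,2), (197126,2), (197129,2), (197144,2), (197186,3), (197192,1),
   (786470,3), (786473,3), (786566,3), (786569,3), (786722,4), (786728,2), (786818,4), (786824,2),
   (786950,2), (786953,2), (786968,2), (787010,3), (787016,1), (3145766,3), (3145769,3),
   (3145862,3), (3145865,3), (3146018,4), (3146024,2), (3146114,4), (3146120,2), (3146246,2),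
   (3146249,2), (3146264,2), (3146306,3), (3146312,1), (12582950,3), (12582953,3), (12583016,3),
   (12583064,3), (12583202,4), (12583208,2), (12583304,3), (12583430,2), (12583433,2),
   (12583448,2), (12583496,2), (50331686,3), (50331689,3), (50331752,3), (50331800,3),
   (50331938,4), (50331944,2), (50332040,3), (50332166,2), (50332169,2), (50332184,2),
   (50332232,2), (201326630,2), (201326633,2), (201326690,3), (201326696,1), (201326726,3),
   (201326729,3), (201326738,3), (201326978,4), (201326984,2), (201327110,2), (201327113,2),
   (201327170,3), (201327176,1), (805306466,5), (805306472,3), (805306502,4), (805306505,4),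
   (805306514,5), (805306520,3), (805306658,4), (805306664,2), (805306754,5), (805306760,3),
   (805306886,3), (805306889,3), (805306898,4), (805306904,2), (805306946,4), (805306952,2),
   (3221225570,5), (3221225576,3), (3221225606,4), (3221225609,4), (3221225618,5), (3221225624,3),
   (3221225762,4), (3221225768,2), (3221225858,5), (3221225864,3), (3221225990,3), (3221225993,3),
   (3221226002,4), (3221226008,2), (3221226050,4), (3221226056,2), (12884901986,5),
   (12884901992,3), (12884902022,4), (12884902025,4), (12884902034,5), (12884902040,3),
   (12884902178,4), (12884902184,2), (12884902274,5), (12884902280,3), (12884902406,3),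
   (12884902409,3), (12884902418,4), (12884902424,2), (12884902466,4), (12884902472,2),
   (51539607650,5), (51539607656,3), (51539607686,4), (51539607689,4), (51539607698,5),
   (51539607704,3), (51539607842,4), (51539607848,2), (51539607938,5), (51539607944,3),
   (51539608070,3), (51539608073,3), (51539608082,4), (51539608088,2), (51539608130,4),
   (51539608136,2), (206158430306,3), (206158430312,1), (206158430342,2), (206158430345,2),
   (206158430354,3), (206158430360,1), (206158430498,2), (206158430504,0), (206158430594,3),
   (206158430600,1), (206158430726,1), (206158430729,1), (206158430738,2), (206158430744,0),
   (206158430786,2), (206158430792,0), (824633720930,3), (824633720936,1), (824633720966,2),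
   (824633720969,2), (824633720978,3), (824633720984,1), (824633721122,2), (824633721128,0),
   (824633721218,3), (824633721224,1), (824633721350,1), (824633721353,1), (824633721362,2),
   (824633721368,0), (824633721410,2), (824633721416,0), (3298534883426,3), (3298534883432,1),
   (3298534883462,2), (3298534883465,2), (3298534883474,3), (3298534883480,1), (3298534883618,2),
   (3298534883624,0), (3298534883714,3), (3298534883720,1), (3298534883846,1), (3298534883849,1),
   (3298534883858,2), (3298534883864,0), (3298534883906,2), (3298534883912,0), (13194139533410,3),
   (13194139533416,1), (13194139533446,2), (13194139533449,2), (13194139533458,3),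
   (13194139533464,1), (13194139533602,2), (13194139533608,0), (13194139533698,3),
   (13194139533704,1), (13194139533830,1), (13194139533833,1), (13194139533842,2),
   (13194139533848,0), (13194139533890,2), (13194139533896,0)]

def path1 : List ℕ :=
  [440, 488, 50331944, 12583208, 299, 809, 569, 12809, 49673, 197129, 786953, 3146249, 713, 587,
   590, 206158430786, 3650]

def path2 : List ℕ :=
  [626, 866, 110, 107, 233, 185, 201326729, 905, 395, 805306760, 3221225864, 12884902280,
   51539607944]

def path3 : List ℕ :=
  [13194139533704, 3298534883720, 824633721224, 3464]

def codeA : ℕ := 392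
def codeB : ℕ := 578

def xs1 : List ℕ := [6, 5, 5, 6, 6, 5, 3, 2, 3, 4, 5, 8, 7, 4, 8, 9, 10, 11, 6, 7, 9, 11]
def ys1 : List ℕ := [10, 9, 10, 9, 11, 5, 11, 9, 7, 5, 7, 9, 7, 12, 11, 9, 7, 9, 7, 4, 3, 4]

def xs0 : List ℕ := [9, 10, 0, 0, 0, 0, 0, 0, 0, 0, 0, 2, 2, 2, 2, 2, 2, 11, 2, 2, 2, 11]
def ys0 : List ℕ := [5, 7, 4, 5, 6, 7, 8, 9, 10, 11, 12, 4, 5, 6, 7, 8, 9, 9, 10, 11, 12, 4]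

end Strip

namespace Strip

set_option synthInstance.maxHeartbeats 400000
set_option synthInstance.maxSize 4096

/-- token digit of cell `k` in a tile code (0 knight, 1 rook, 2 bishop, 3 hole) -/
def tok (e k : ℕ) : ℕ := e / 4 ^ k % 4

def dn (a b : ℕ) : ℕ := (a - b) + (b - a)

/-- kind of a single step between squares: 0 knight, 1 rook, 2 bishop, 4 nothing -/
def kd (dx dy : ℕ) : ℕ :=
  if dx = 0 then (if dy = 1 then 1 else 4)
  else if dx = 1 then (if dy = 0 then 1 else if dy = 1 then 2 else if dy = 2 then 0 else 4)
  else if dx = 2 then (if dy = 1 then 0 else 4) else 4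

def cx (i k : ℕ) : ℕ := if i = 0 then xs0.getD k 0 else xs1.getD k 0
def cy (i k : ℕ) : ℕ := if i = 0 then ys0.getD k 0 else ys1.getD k 0

def px (i k : ℕ) : ℕ := 8 * i + cx i k
def py (i k : ℕ) : ℕ := cy i k

/-- lookup of a weight in a table -/
def look : List (ℕ × ℕ) → ℕ → Option ℕ
  | [], _ => none
  | (a, b) :: l, e => if a = e then some b else look l e

def full0 : List (ℕ × ℕ) := [(0, 0)]
def hole0 : List (ℕ × ℕ) := [(3, 0), (12, 0), (3 * 4 ^ 17, 0), (3 * 4 ^ 21, 0)]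

def tF (i : ℕ) : List (ℕ × ℕ) := if i = 0 then full0 else tFull
def tH (i : ℕ) : List (ℕ × ℕ) := if i = 0 then hole0 else tHole

/-- code after the token of cell `k'` moves to the hole at `k` -/
def swp (e k k' : ℕ) : ℕ := e + tok e k' * 4 ^ k + (3 - tok e k') * 4 ^ k' - 3 * 4 ^ k

theorem chk_local : ∀ κ < 2, ∀ p ∈ tH κ, ∀ k < 22, tok p.1 k = 3 →
    ∀ k' < 22, kd (dn (cx κ k) (cx κ k')) (dn (cy κ k) (cy κ k')) = tok p.1 k' →
    look (tH κ) (swp p.1 k k') = some p.2 ∧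
    ∀ b < 22, tok (swp p.1 k k') b =
      if b = k then tok p.1 k' else if b = k' then 3 else tok p.1 b := by
  decide +kernel

theorem chk_cross1 : ∀ κ < 2, ∀ p ∈ tF 1, ∀ k < 22, ∀ k' < 22,
    kd (dn (cx κ k) (8 + cx 1 k')) (dn (cy κ k) (cy 1 k')) = tok p.1 k' →
    tok p.1 k' = 0 ∧ ((k = 17 ∧ k' = 2) ∨ (k = 21 ∧ k' = 5)) := by
  decide +kernel

theorem chk_cross2 : ∀ κ < 2, ∀ p ∈ tF κ, ∀ k < 22, ∀ k' < 22,
    kd (dn (cx κ k) (8 + cx 1 k')) (dn (cy κ k) (cy 1 k')) = tok p.1 k →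
    tok p.1 k = 0 ∧ ((k = 17 ∧ k' = 2) ∨ (k = 21 ∧ k' = 5)) := by
  decide +kernel

def wt (κ k : ℕ) : ℕ := if κ = 0 then 0 else if k = 17 then 2 else if k = 2 then 1 else 0

/-- filling a hole at a port cell -/
theorem chk_fill : ∀ κ < 2, ∀ p ∈ tH κ, ∀ k ∈ [2, 5, 17, 21], tok p.1 k = 3 →
    ∃ q ∈ tF κ, q.1 = p.1 - 3 * 4 ^ k ∧ p.2 = q.2 + wt κ k ∧
    ∀ b < 22, tok q.1 b = if b = k then 0 else tok p.1 b := by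
  decide +kernel

theorem chk_open : ∀ κ < 2, ∀ p ∈ tF κ, ∀ k ∈ [2, 5, 17, 21], (κ = 0 → 10 < k) → tok p.1 k = 0 →
    ∃ q ∈ tH κ, q.1 = p.1 + 3 * 4 ^ k ∧ q.2 = p.2 + wt κ k ∧
    ∀ b < 22, tok q.1 b = if b = k then 3 else tok p.1 b := by
  decide +kernel

theorem chk_full : ∀ κ < 2, ∀ p ∈ tF κ, ∀ k < 22, tok p.1 k ≠ 3 := by
  decide +kernel

theorem chk_hole : ∀ κ < 2, ∀ p ∈ tH κ, ∃ k < 22, tok p.1 k = 3 ∧ 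
    ∀ b < 22, tok p.1 b = 3 → b = k := by
  decide +kernel

theorem chk_look : ∀ κ < 2, (∀ p ∈ tF κ, look (tF κ) p.1 = some p.2) ∧
    (∀ p ∈ tH κ, look (tH κ) p.1 = some p.2 ∧ look (tF κ) p.1 = none) := by
  decide +kernel

def sumd : ℕ → ℕ → ℕ
  | 0, _ => 0
  | k + 1, e => sumd k e + tok e k * 4 ^ k

theorem chk_sum : ∀ κ < 2, (∀ p ∈ tF κ, sumd 22 p.1 = p.1) ∧ (∀ p ∈ tH κ, sumd 22 p.1 = p.1) := by
  decide +kernel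

theorem chk_inj : ∀ κ < 2, ∀ κ' < 2, ∀ k < 22, ∀ k' < 22, cy κ k = cy κ' k' →
    (κ = κ' → cx κ k = cx κ' k' → k = k') ∧
    (κ = 1 → κ' = 1 → cx κ k % 8 = cx κ' k' % 8 → k = k') ∧
    (κ = 0 → κ' = 1 → cx 0 k ≠ 8 + cx 1 k') := by
  decide +kernel

theorem chk_bnd : ∀ κ < 2, ∀ k < 22, cx κ k ≤ 11 ∧ 3 ≤ cy κ k ∧ cy κ k ≤ 12 ∧
    (κ = 1 → 2 ≤ cx κ k) := by
  decide +kernel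

def okStep (κ e e' : ℕ) : Prop := ∃ k < 22, ∃ k' < 22, tok e k = 3 ∧ tok e k' ≠ 3 ∧
  kd (dn (cx κ k) (cx κ k')) (dn (cy κ k) (cy κ k')) = tok e k' ∧
  ∀ b < 22, tok e' b = if b = k then tok e k' else if b = k' then 3 else tok e b

instance (κ e e' : ℕ) : Decidable (okStep κ e e') := by unfold okStep; infer_instance

theorem chk_path1 : List.IsChain (okStep 1) path1 := by decide +kernel
theorem chk_path2 : List.IsChain (okStep 1) path2 := by decide +kernel
theorem chk_path3 : List.IsChain (okStep 1) path3 := by decide +kernel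
theorem chk_path0 : List.IsChain (okStep 0) [3 * 4 ^ 21, 3, 12, 3 * 4 ^ 17] := by decide +kernel

end Strip

namespace Strip

def kap (i : ℕ) : ℕ := if i = 0 then 0 else 1

theorem kap_lt (i : ℕ) : kap i < 2 := by unfold kap; split <;> norm_num
theorem kap_succ (i : ℕ) : kap (i + 1) = 1 := by simp [kap]
theorem cx_kap (i k : ℕ) : cx i k = cx (kap i) k := by
  unfold cx kap; by_cases h : i = 0 <;> simp [h]
theorem cy_kap (i k : ℕ) : cy i k = cy (kap i) k := by
  unfold cy kap; by_cases h : i = 0 <;> simp [h]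
theorem tF_kap (i : ℕ) : tF i = tF (kap i) := by
  unfold tF kap; by_cases h : i = 0 <;> simp [h]
theorem tH_kap (i : ℕ) : tH i = tH (kap i) := by
  unfold tH kap; by_cases h : i = 0 <;> simp [h]

theorem dn_same (i a b : ℕ) : dn (8 * i + a) (8 * i + b) = dn a b := by unfold dn; omega
theorem dn_next (i a b : ℕ) : dn (8 * i + a) (8 * (i + 1) + b) = dn a (8 + b) := by
  unfold dn; omega
theorem dn_comm (a b : ℕ) : dn a b = dn b a := by unfold dn; omega

theorem kd_far {a b : ℕ} (h : 3 ≤ a) : kd a b = 4 := by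
  unfold kd
  rw [if_neg (by omega), if_neg (by omega), if_neg (by omega)]

theorem tok_lt (e k : ℕ) : tok e k < 4 := Nat.mod_lt _ (by norm_num)

theorem bnd (i k : ℕ) (hk : k < 22) : cx i k ≤ 11 ∧ 3 ≤ cy i k ∧ cy i k ≤ 12 ∧
    (1 ≤ i → 2 ≤ cx i k) := by
  have := chk_bnd (kap i) (kap_lt i) k hk
  rw [cx_kap, cy_kap]
  refine ⟨this.1, this.2.1, this.2.2.1, fun hi => this.2.2.2 ?_⟩
  unfold kap; simp; omega

theorem pos_inj {i k j k' : ℕ} (hk : k < 22) (hk' : k' < 22) (hx : px i k = px j k')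
    (hy : py i k = py j k') : i = j ∧ k = k' := by
  unfold px py at *
  have b1 := bnd i k hk
  have b2 := bnd j k' hk'
  have key : ∀ i j k k' : ℕ, k < 22 → k' < 22 → 8 * i + cx i k = 8 * j + cx j k' →
      cy i k = cy j k' → i = 0 → i = j ∧ k = k' := by
    intro i j k k' hk hk' hx hy hi
    have b1 := bnd i k hk
    have b2 := bnd j k' hk'
    subst hi
    rcases j with _ | j
    · refine ⟨rfl, ?_⟩
      exact (chk_inj 0 (by norm_num) 0 (by norm_num) k hk k' hk' hy).1 rfl (by omega)
    · exfalso
      have hy' : cy 0 k = cy 1 k' := by rw [hy, cy_kap, kap_succ]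
      have := (chk_inj 0 (by norm_num) 1 (by norm_num) k hk k' hk' hy').2.2 rfl rfl
      rw [cx_kap (j + 1), kap_succ] at hx
      have h2 := (chk_bnd 1 (by norm_num) k' hk').2.2.2 rfl
      have : j = 0 := by omega
      subst this
      omega
  rcases i with _ | i
  · exact key 0 j k k' hk hk' hx hy rfl
  rcases j with _ | j
  · have := key 0 (i + 1) k' k hk' hk hx.symm hy.symm rfl
    exact ⟨this.1.symm, this.2.symm⟩
  rw [cx_kap (i + 1), cx_kap (j + 1), kap_succ, kap_succ] at hx
  rw [cy_kap (i + 1), cy_kap (j + 1), kap_succ, kap_succ] at hy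
  have : k = k' := (chk_inj 1 (by norm_num) 1 (by norm_num) k hk k' hk' hy).2.1 rfl rfl (by omega)
  subst this
  exact ⟨by omega, rfl⟩

def sc : ℕ → ℕ
  | 0 => 0
  | j + 1 => 2 ^ j

def ph (i e : ℕ) : ℕ :=
  match look (tF i) e with
  | some v => v
  | none => (look (tH i) e).getD 0

theorem ph_F {i : ℕ} {p : ℕ × ℕ} (hp : p ∈ tF i) : ph i p.1 = p.2 := by
  have h := (chk_look (kap i) (kap_lt i)).1 p (by rwa [← tF_kap])
  unfold ph; rw [tF_kap, h]

theorem ph_H {i : ℕ} {p : ℕ × ℕ} (hp : p ∈ tH i) : ph i p.1 = p.2 := by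
  have h := (chk_look (kap i) (kap_lt i)).2 p (by rwa [← tH_kap])
  unfold ph; rw [tF_kap, h.2, tH_kap, h.1]; rfl

theorem look_mem {l : List (ℕ × ℕ)} {e v : ℕ} (h : look l e = some v) : (e, v) ∈ l := by
  induction l with
  | nil => simp [look] at h
  | cons a l ih =>
    obtain ⟨a, b⟩ := a
    unfold look at h
    split at h
    · simp_all
    · exact List.mem_cons_of_mem _ (ih h)

def Phi (m : ℕ) (E : ℕ → ℕ) : ℤ := ∑ j ∈ Finset.range (m + 1), (sc j : ℤ) * (ph j (E j) : ℤ)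

theorem Phi_update {m i : ℕ} (hi : i ≤ m) (F : ℕ → ℕ) (e : ℕ) :
    Phi m (Function.update F i e) = Phi m F + sc i * ((ph i e : ℤ) - ph i (F i)) := by
  unfold Phi
  have hm : i ∈ Finset.range (m + 1) := by simp; omega
  rw [← Finset.add_sum_erase _ _ hm, ← Finset.add_sum_erase (Finset.range (m + 1)) (fun j => (sc j : ℤ) * (ph j (F j) : ℤ)) hm]
  have : ∑ x ∈ (Finset.range (m + 1)).erase i, (sc x : ℤ) * (ph x (Function.update F i e x) : ℤ)
      = ∑ x ∈ (Finset.range (m + 1)).erase i, (sc x : ℤ) * (ph x (F x) : ℤ) := by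
    apply Finset.sum_congr rfl
    intro x hx
    rw [Function.update_of_ne (Finset.ne_of_mem_erase hx)]
  rw [this]
  simp
  ring

def SwapAt (m : ℕ) (E E' : ℕ → ℕ) (i k j k' : ℕ) : Prop :=
  i ≤ m ∧ j ≤ m ∧ k < 22 ∧ k' < 22 ∧ tok (E i) k = 3 ∧ tok (E j) k' ≠ 3 ∧
  kd (dn (px i k) (px j k')) (dn (py i k) (py j k')) = tok (E j) k' ∧
  ∀ a ≤ m, ∀ b < 22, tok (E' a) b =
    if a = i ∧ b = k then tok (E j) k' else if a = j ∧ b = k' then 3 else tok (E a) b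

structure Inv (m : ℕ) (E : ℕ → ℕ) (F : ℕ → ℕ) (i h w : ℕ) : Prop where
  hi : i ≤ m
  hE : E = Function.update F i h
  hF : ∀ j ≤ m, ∃ v, (F j, v) ∈ tF j
  hh : (h, w) ∈ tH i

theorem Inv.full {m E F i h w} (I : Inv m E F i h w) {j k : ℕ} (hj : j ≤ m) (hk : k < 22)
    (h3 : tok (E j) k = 3) : j = i := by
  by_contra hne
  rw [I.hE, Function.update_of_ne hne] at h3
  obtain ⟨v, hv⟩ := I.hF j hj
  rw [tF_kap] at hv
  exact chk_full _ (kap_lt j) _ hv k hk h3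

theorem Inv.uniq {m E F i h w} (I : Inv m E F i h w) {j k j' k' : ℕ} (hj : j ≤ m) (hk : k < 22)
    (h3 : tok (E j) k = 3) (hj' : j' ≤ m) (hk' : k' < 22) (h3' : tok (E j') k' = 3) :
    j = j' ∧ k = k' := by
  have a := I.full hj hk h3
  have b := I.full hj' hk' h3'
  subst a; subst b
  rw [I.hE, Function.update_self] at h3 h3'
  have hh := I.hh
  rw [tH_kap] at hh
  obtain ⟨c, -, -, hc⟩ := chk_hole _ (kap_lt _) _ hh
  exact ⟨rfl, by rw [hc k hk h3, hc k' hk' h3']⟩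

theorem Inv.exists {m E F i h w} (I : Inv m E F i h w) : ∃ k < 22, tok (E i) k = 3 := by
  have hh := I.hh
  rw [tH_kap] at hh
  obtain ⟨c, hc, h3, -⟩ := chk_hole _ (kap_lt _) _ hh
  exact ⟨c, hc, by rw [I.hE, Function.update_self]; exact h3⟩

theorem closure {m : ℕ} {E F : ℕ → ℕ} {i h w : ℕ} (I : Inv m E F i h w) {k j k' : ℕ}
    (hj : j ≤ m) (hk : k < 22) (hk' : k' < 22) (h3 : tok (E i) k = 3)
    (hne : tok (E j) k' ≠ 3)
    (hkd : kd (dn (px i k) (px j k')) (dn (py i k) (py j k')) = tok (E j) k') :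
    ∃ E' F' i' h' w', Inv m E' F' i' h' w' ∧ SwapAt m E E' i k j k' ∧
      |Phi m E' - Phi m E| ≤ 1 := by
  have hi := I.hi
  have hh := I.hh
  have hhk := I.hh
  rw [tH_kap] at hhk
  have hEi : E i = h := by rw [I.hE, Function.update_self]
  have hEo : ∀ a, a ≠ i → E a = F a := fun a ha => by rw [I.hE, Function.update_of_ne ha]
  have hfar : tok (E j) k' < 4 := tok_lt _ _
  have bi := bnd i k hk
  have bj := bnd j k' hk'
  by_cases c1 : j = i
  · subst c1
    rw [hEi] at h3 hne hkd hfar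
    unfold px py at hkd
    rw [dn_same, cx_kap, cx_kap j k', cy_kap, cy_kap j k'] at hkd
    obtain ⟨hl, hd⟩ := chk_local _ (kap_lt j) _ hhk k hk h3 k' hk' hkd
    have hm := look_mem hl
    rw [← tH_kap] at hm
    refine ⟨Function.update F j (swp h k k'), F, j, _, _, ⟨hj, rfl, I.hF, hm⟩, ?_, ?_⟩
    · refine ⟨hj, hj, hk, hk', by rw [hEi]; exact h3, by rw [hEi]; exact hne, ?_, ?_⟩
      · unfold px py
        rw [hEi, dn_same, cx_kap, cx_kap j k', cy_kap, cy_kap j k']; exact hkd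
      · intro a ha b hb
        by_cases haj : a = j
        · subst haj
          rw [Function.update_self, hEi]
          simpa using hd b hb
        · rw [Function.update_of_ne haj, hEo a haj]
          simp [haj]
    · have e1 : ph j (swp h k k') = w := ph_H hm
      have e2 : ph j h = w := ph_H hh
      rw [I.hE, Phi_update hj, Phi_update hj, e1, e2]; simp
  · rw [hEo j c1] at hne hkd hfar
    obtain ⟨v, hv⟩ := I.hF j hj
    have hvk := hv
    rw [tF_kap] at hvk
    by_cases c2 : j = i + 1
    · subst c2
      unfold px py at hkd
      rw [dn_next, cx_kap, cy_kap, cx_kap (i + 1), cy_kap (i + 1), kap_succ] at hkd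
      rw [kap_succ] at hvk
      obtain ⟨t0, hport⟩ := chk_cross1 _ (kap_lt i) _ hvk k hk k' hk' hkd
      simp only at t0
      have hp1 : k ∈ [2, 5, 17, 21] := by rcases hport with h | h <;> simp [h.1]
      have hp2 : k' ∈ [2, 5, 17, 21] := by rcases hport with h | h <;> simp [h.2]
      rw [hEi] at h3
      obtain ⟨⟨q, qv⟩, hq, hq1, hq2, hq3⟩ := chk_fill _ (kap_lt i) _ hhk k hp1 h3
      obtain ⟨⟨r, rv⟩, hr, hr1, hr2, hr3⟩ := chk_open 1 (by norm_num) _ hvk k' hp2 (by norm_num) t0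
      simp only at hq1 hq2 hq3 hr1 hr2 hr3
      rw [← tF_kap] at hq
      have hr' : (r, rv) ∈ tH (i + 1) := by rw [tH_kap, kap_succ]; exact hr
      refine ⟨Function.update (Function.update F i q) (i + 1) r, Function.update F i q, i + 1, r, rv,
        ⟨hj, rfl, ?_, hr'⟩, ?_, ?_⟩
      · intro a ha
        by_cases hai : a = i
        · subst hai; rw [Function.update_self]; exact ⟨_, hq⟩
        · rw [Function.update_of_ne hai]; exact I.hF a ha
      · refine ⟨hi, hj, hk, hk', by rw [hEi]; exact h3, by rw [hEo _ c1]; exact hne, ?_, ?_⟩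
        · unfold px py
          rw [hEo _ c1, dn_next, cx_kap, cy_kap, cx_kap (i + 1), cy_kap (i + 1), kap_succ]
          exact hkd
        · intro a ha b hb
          rw [hEo _ c1, t0]
          by_cases ha1 : a = i + 1
          · subst ha1
            rw [Function.update_self, hEo _ c1, hr3 b hb]
            simp
          · rw [Function.update_of_ne ha1]
            by_cases ha2 : a = i
            · subst ha2
              rw [Function.update_self, hEi, hq3 b hb]
              simp
            · rw [Function.update_of_ne ha2, hEo _ ha2]
              simp [ha1, ha2]
      · have e1 : ph i q = qv := ph_F hq
        have e2 : ph i h = w := ph_H hh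
        have e3 : ph (i + 1) r = rv := ph_H hr'
        have e4 : ph (i + 1) (F (i + 1)) = v := ph_F hv
        rw [I.hE, Phi_update hj, Phi_update hi, Phi_update hi,
          Function.update_of_ne (by omega : i + 1 ≠ i), e1, e2, e3, e4, hq2, hr2]
        rcases hport with ⟨rfl, rfl⟩ | ⟨rfl, rfl⟩
        · rcases i with _ | i
          · simp [sc, wt, kap]
          · simp [sc, wt, kap]; ring_nf; simp
        · simp [wt]
    · by_cases c3 : i = j + 1
      · subst c3
        unfold px py at hkd
        rw [dn_comm, dn_comm (cy _ _), dn_next, cx_kap, cy_kap, cx_kap (j + 1), cy_kap (j + 1),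
          kap_succ] at hkd
        obtain ⟨t0, hport⟩ := chk_cross2 _ (kap_lt j) _ hvk k' hk' k hk hkd
        simp only at t0
        have hp1 : k ∈ [2, 5, 17, 21] := by rcases hport with h | h <;> simp [h.2]
        have hp2 : k' ∈ [2, 5, 17, 21] := by rcases hport with h | h <;> simp [h.1]
        rw [hEi] at h3
        rw [kap_succ] at hhk
        obtain ⟨⟨q, qv⟩, hq, hq1, hq2, hq3⟩ := chk_fill 1 (by norm_num) _ hhk k hp1 h3
        obtain ⟨⟨r, rv⟩, hr, hr1, hr2, hr3⟩ := chk_open _ (kap_lt j) _ hvk k' hp2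
          (by intro _; rcases hport with h | h <;> omega) t0
        simp only at hq1 hq2 hq3 hr1 hr2 hr3
        have hq' : (q, qv) ∈ tF (j + 1) := by rw [tF_kap, kap_succ]; exact hq
        have hr' : (r, rv) ∈ tH j := by rw [tH_kap]; exact hr
        refine ⟨Function.update (Function.update F (j + 1) q) j r, Function.update F (j + 1) q,
          j, r, rv, ⟨hj, rfl, ?_, hr'⟩, ?_, ?_⟩
        · intro a ha
          by_cases hai : a = j + 1
          · subst hai; rw [Function.update_self]; exact ⟨_, hq'⟩
          · rw [Function.update_of_ne hai]; exact I.hF a ha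
        · refine ⟨hi, hj, hk, hk', by rw [hEi]; exact h3, by rw [hEo _ c1]; exact hne, ?_, ?_⟩
          · unfold px py
            rw [hEo _ c1, dn_comm, dn_comm (cy _ _), dn_next, cx_kap, cy_kap, cx_kap (j + 1),
              cy_kap (j + 1), kap_succ]
            exact hkd
          · intro a ha b hb
            rw [hEo _ c1, t0]
            by_cases ha1 : a = j
            · subst ha1
              rw [Function.update_self, hEo _ c1, hr3 b hb]
              simp
            · rw [Function.update_of_ne ha1]
              by_cases ha2 : a = j + 1
              · subst ha2
                rw [Function.update_self, hEi, hq3 b hb]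
                simp
              · rw [Function.update_of_ne ha2, hEo _ ha2]
                simp [ha1, ha2]
        · have e1 : ph (j + 1) q = qv := ph_F hq'
          have e2 : ph (j + 1) h = w := ph_H hh
          have e3 : ph j r = rv := ph_H hr'
          have e4 : ph j (F j) = v := ph_F hv
          rw [I.hE, Phi_update hj, Phi_update hi, Phi_update hi,
            Function.update_of_ne (by omega : j ≠ j + 1), e1, e2, e3, e4, hq2, hr2]
          rcases hport with ⟨rfl, rfl⟩ | ⟨rfl, rfl⟩
          · rcases j with _ | j
            · simp [sc, wt, kap]
            · simp [sc, wt, kap]; ring_nf; simp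
          · simp [wt]
      · exfalso
        have : 3 ≤ dn (px i k) (px j k') := by
          unfold dn px
          rcases Nat.lt_or_ge i j with h | h
          · have := bj.2.2.2 (by omega); omega
          · have := bi.2.2.2 (by omega); omega
        rw [kd_far this] at hkd
        omega

end Strip

namespace Strip

set_option synthInstance.maxHeartbeats 400000
set_option synthInstance.maxSize 4096

def Sw (m : ℕ) (E E' : ℕ → ℕ) : Prop := ∃ i k j k', SwapAt m E E' i k j k'

abbrev Reach (m : ℕ) := Relation.ReflTransGen (Sw m)

theorem sw_local {m i e e' : ℕ} (hi : i ≤ m) (F : ℕ → ℕ) (h : okStep (kap i) e e') :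
    Sw m (Function.update F i e) (Function.update F i e') := by
  obtain ⟨k, hk, k', hk', h3, hne, hkd, hd⟩ := h
  refine ⟨i, k, i, k', hi, hi, hk, hk', ?_, ?_, ?_, ?_⟩
  · rw [Function.update_self]; exact h3
  · rw [Function.update_self]; exact hne
  · unfold px py
    rw [Function.update_self, dn_same, cx_kap, cx_kap i k', cy_kap, cy_kap i k']; exact hkd
  · intro a ha b hb
    by_cases hai : a = i
    · subst hai
      simp only [Function.update_self, true_and]
      exact hd b hb
    · simp [hai]

theorem reach_chain {m i : ℕ} (hi : i ≤ m) (F : ℕ → ℕ) (l : List ℕ) :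
    ∀ a z, List.IsChain (okStep (kap i)) (a :: l) → (a :: l).getLast? = some z →
    Reach m (Function.update F i a) (Function.update F i z) := by
  induction l with
  | nil =>
    intro a z _ hz
    simp at hz
    subst hz
    exact Relation.ReflTransGen.refl
  | cons b l ih =>
    intro a z hc hz
    rw [List.isChain_cons_cons] at hc
    exact Relation.ReflTransGen.head (sw_local hi F hc.1) (ih b z hc.2 (by simpa using hz))

def OpenAt (f k : ℕ) : Prop :=
  tok f k = 0 ∧ ∀ b < 22, tok (f + 3 * 4 ^ k) b = if b = k then 3 else tok f b

instance (f k : ℕ) : Decidable (OpenAt f k) := by unfold OpenAt; infer_instance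

theorem kd_port : ∀ κ < 2, ∀ p ∈ [(17, 2), (21, 5)],
    kd (dn (cx κ p.1) (8 + cx 1 p.2)) (dn (cy κ p.1) (cy 1 p.2)) = 0 := by
  decide +kernel

theorem sw_up {m i k k' : ℕ} (hi : i + 1 ≤ m) (F : ℕ → ℕ) (hp : (k, k') ∈ [(17, 2), (21, 5)])
    (h1 : OpenAt (F i) k) (h2 : OpenAt (F (i + 1)) k') :
    Sw m (Function.update F i (F i + 3 * 4 ^ k))
      (Function.update F (i + 1) (F (i + 1) + 3 * 4 ^ k')) := by
  have hk : k < 22 ∧ k' < 22 := by simp at hp; omega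
  refine ⟨i, k, i + 1, k', by omega, hi, hk.1, hk.2, ?_, ?_, ?_, ?_⟩
  · rw [Function.update_self, h1.2 k hk.1]; simp
  · rw [Function.update_of_ne (by omega), h2.1]; norm_num
  · unfold px py
    rw [Function.update_of_ne (by omega), h2.1, dn_next, cx_kap, cy_kap, cx_kap (i + 1),
      cy_kap (i + 1), kap_succ]
    exact kd_port _ (kap_lt i) _ hp
  · intro a ha b hb
    rw [Function.update_of_ne (by omega : i + 1 ≠ i), h2.1]
    by_cases c1 : a = i + 1
    · subst c1
      simp [h2.2 b hb]
    · by_cases c2 : a = i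
      · subst c2
        simp only [Function.update_self, ne_eq, c1, not_false_eq_true, Function.update_of_ne,
          true_and, false_and, if_false, h1.2 b hb]
        by_cases hbk : b = k
        · subst hbk; simp [h1.1]
        · simp [hbk]
      · simp [c1, c2]

theorem sw_down {m i k k' : ℕ} (hi : i + 1 ≤ m) (F : ℕ → ℕ) (hp : (k, k') ∈ [(17, 2), (21, 5)])
    (h1 : OpenAt (F i) k) (h2 : OpenAt (F (i + 1)) k') :
    Sw m (Function.update F (i + 1) (F (i + 1) + 3 * 4 ^ k'))
      (Function.update F i (F i + 3 * 4 ^ k)) := by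
  have hk : k < 22 ∧ k' < 22 := by simp at hp; omega
  refine ⟨i + 1, k', i, k, hi, by omega, hk.2, hk.1, ?_, ?_, ?_, ?_⟩
  · rw [Function.update_self, h2.2 k' hk.2]; simp
  · rw [Function.update_of_ne (by omega), h1.1]; norm_num
  · unfold px py
    rw [Function.update_of_ne (by omega), h1.1, dn_comm, dn_comm (cy _ _), dn_next, cx_kap, cy_kap,
      cx_kap (i + 1), cy_kap (i + 1), kap_succ]
    exact kd_port _ (kap_lt i) _ hp
  · intro a ha b hb
    rw [Function.update_of_ne (by omega : i ≠ i + 1), h1.1]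
    by_cases c1 : a = i + 1
    · subst c1
      simp only [Function.update_self, ne_eq, Nat.add_eq_left, one_ne_zero, not_false_eq_true,
        Function.update_of_ne,
          true_and, false_and, if_false, h2.2 b hb]
      by_cases hbk : b = k'
      · subst hbk; simp [h2.1]
      · simp [hbk]
    · by_cases c2 : a = i
      · subst c2
        simp [h1.2 b hb]
      · simp [c1, c2]

theorem open_0 : OpenAt 0 17 ∧ OpenAt 0 21 := by decide +kernel
theorem open_A : OpenAt codeA 2 ∧ OpenAt codeA 5 ∧ OpenAt codeA 17 ∧ OpenAt codeA 21 := by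
  decide +kernel
theorem open_B : OpenAt codeB 2 ∧ OpenAt codeB 5 := by decide +kernel

theorem path1_ends : path1.head? = some (codeA + 3 * 4 ^ 2) ∧
    path1.getLast? = some (codeB + 3 * 4 ^ 5) := by decide +kernel
theorem path2_ends : path2.head? = some (codeB + 3 * 4 ^ 2) ∧
    path2.getLast? = some (codeA + 3 * 4 ^ 17) := by decide +kernel
theorem path3_ends : path3.head? = some (codeA + 3 * 4 ^ 21) ∧
    path3.getLast? = some (codeA + 3 * 4 ^ 5) := by decide +kernel

theorem reach_path {m i : ℕ} (hi : i ≤ m) (F : ℕ → ℕ) {l : List ℕ} {a z : ℕ}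
    (hc : List.IsChain (okStep (kap i)) l) (h : l.head? = some a ∧ l.getLast? = some z) :
    Reach m (Function.update F i a) (Function.update F i z) := by
  rcases l with _ | ⟨b, l⟩
  · simp at h
  · obtain ⟨h1, h2⟩ := h
    simp at h1
    subst h1
    exact reach_chain hi F l _ _ hc h2

theorem open_ge {F : ℕ → ℕ} {i : ℕ} (h0 : F 0 = 0) (hA : ∀ j, 1 ≤ j → j ≤ i → F j = codeA) :
    OpenAt (F i) 17 ∧ OpenAt (F i) 21 := by
  rcases i with _ | i
  · rw [h0]; exact open_0
  · rw [hA (i + 1) (by omega) le_rfl]; exact open_A.2.2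

theorem hub_back {m : ℕ} (F : ℕ → ℕ) (h0 : F 0 = 0) : ∀ i ≤ m,
    (∀ j, 1 ≤ j → j ≤ i → F j = codeA) →
    Reach m (Function.update F i (F i + 3 * 4 ^ 21)) (Function.update F 0 (3 * 4 ^ 21)) := by
  intro i
  induction i with
  | zero => intro _ _; rw [h0, Nat.zero_add]
  | succ i ih =>
    intro hi hA
    have hA' : ∀ j, 1 ≤ j → j ≤ i → F j = codeA := fun j h1 h2 => hA j h1 (by omega)
    have e := hA (i + 1) (by omega) le_rfl
    have r1 : Reach m (Function.update F (i + 1) (codeA + 3 * 4 ^ 21))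
        (Function.update F (i + 1) (codeA + 3 * 4 ^ 5)) :=
      reach_path hi F (by rw [kap_succ]; exact chk_path3) path3_ends
    have r2 := sw_down (k := 21) (k' := 5) hi F (by simp) (open_ge h0 hA').2
      (by rw [e]; exact open_A.2.1)
    rw [e] at r2 ⊢
    exact r1.trans (Relation.ReflTransGen.head r2 (ih (by omega) hA'))

theorem count_up {m : ℕ} : ∀ i ≤ m, ∀ F : ℕ → ℕ, F 0 = 0 →
    (∀ j, 1 ≤ j → j ≤ i → F j = codeA) →
    Reach m (Function.update F 0 (3 * 4 ^ 21)) (Function.update F i (F i + 3 * 4 ^ 17)) := by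
  intro i
  induction i with
  | zero =>
    intro _ F h0 _
    rw [h0, Nat.zero_add]
    exact reach_path (by omega) F (l := [3 * 4 ^ 21, 3, 12, 3 * 4 ^ 17]) chk_path0 (by simp)
  | succ i ih =>
    intro hi F h0 hA
    have hA' : ∀ j, 1 ≤ j → j ≤ i → F j = codeA := fun j h1 h2 => hA j h1 (by omega)
    have e := hA (i + 1) (by omega) le_rfl
    have r1 := ih (by omega) F h0 hA'
    have r2 := sw_up (k := 17) (k' := 2) hi F (by simp) (open_ge h0 hA').1
      (by rw [e]; exact open_A.1)
    rw [e] at r2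
    have r3 : Reach m (Function.update F (i + 1) (codeA + 3 * 4 ^ 2))
        (Function.update F (i + 1) (codeB + 3 * 4 ^ 5)) :=
      reach_path hi F (by rw [kap_succ]; exact chk_path1) path1_ends
    set G := Function.update F (i + 1) codeB with hG
    have G0 : G 0 = 0 := by rw [hG, Function.update_of_ne (by omega), h0]
    have Gi : G (i + 1) = codeB := by rw [hG, Function.update_self]
    have GA : ∀ j, 1 ≤ j → j ≤ i → G j = codeA := fun j h1 h2 => by
      rw [hG, Function.update_of_ne (by omega), hA' j h1 h2]
    have GG : ∀ v, Function.update G (i + 1) v = Function.update F (i + 1) v := fun v => by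
      rw [hG, Function.update_idem]
    have r4 := sw_down (k := 21) (k' := 5) hi G (by simp) (open_ge G0 GA).2
      (by rw [Gi]; exact open_B.2)
    rw [Gi, GG] at r4
    have r5 := hub_back (m := m) G G0 i (by omega) GA
    have r6 := ih (by omega) G G0 GA
    have r7 := sw_up (k := 17) (k' := 2) hi G (by simp) (open_ge G0 GA).1
      (by rw [Gi]; exact open_B.1)
    rw [Gi, GG] at r7
    have r8 : Reach m (Function.update F (i + 1) (codeB + 3 * 4 ^ 2))
        (Function.update F (i + 1) (codeA + 3 * 4 ^ 17)) :=
      reach_path hi F (by rw [kap_succ]; exact chk_path2) path2_ends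
    rw [e]
    exact ((r1.tail r2).trans r3).trans
      (Relation.ReflTransGen.head r4 (r5.trans ((r6.tail r7).trans r8)))

/-- base filling -/
def base (j : ℕ) : ℕ := if j = 0 then 0 else codeA

def startE : ℕ → ℕ := Function.update base 0 (3 * 4 ^ 21)
def endE (m : ℕ) : ℕ → ℕ := Function.update base m (base m + 3 * 4 ^ 17)

theorem reach_main (m : ℕ) : Reach m startE (endE m) :=
  count_up m le_rfl base (by simp [base]) (fun j h _ => by simp [base]; omega)

theorem mem_A : (codeA, 1) ∈ tF 1 ∧ (codeA + 3 * 4 ^ 17, 3) ∈ tH 1 ∧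
    (0, 0) ∈ tF 0 ∧ (3 * 4 ^ 21, 0) ∈ tH 0 := by decide +kernel

theorem base_mem (j : ℕ) : ∃ v, (base j, v) ∈ tF j := by
  rcases j with _ | j
  · exact ⟨0, mem_A.2.2.1⟩
  · exact ⟨1, by rw [tF_kap, kap_succ]; exact mem_A.1⟩

theorem inv_start (m : ℕ) : Inv m startE base 0 (3 * 4 ^ 21) 0 :=
  ⟨by omega, rfl, fun j _ => base_mem j, mem_A.2.2.2⟩

theorem inv_end (m : ℕ) : Inv (m + 1) (endE (m + 1)) base (m + 1) (codeA + 3 * 4 ^ 17) 3 :=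
  ⟨le_rfl, by simp [endE, base], fun j _ => base_mem j, by
    rw [tH_kap, kap_succ]; exact mem_A.2.1⟩

theorem Phi_diff (m : ℕ) : Phi (m + 1) (endE (m + 1)) - Phi (m + 1) startE = 2 ^ (m + 1) := by
  rw [(inv_end m).hE, startE, Phi_update le_rfl, Phi_update (by omega)]
  have e1 : ph (m + 1) (codeA + 3 * 4 ^ 17) = 3 := ph_H (inv_end m).hh
  have e2 : ph (m + 1) (base (m + 1)) = 1 := by
    have : ((codeA, 1) : ℕ × ℕ) ∈ tF (m + 1) := by rw [tF_kap, kap_succ]; exact mem_A.1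
    exact ph_F this
  rw [e1, e2]
  simp [sc]
  ring

end Strip


namespace Strip
open Chess
set_option autoImplicit false

/-! Chess layer: the weight function. -/

def gw (n : ℕ) (r : ℤ) : Option (Color × Piece) → ℤ
  | none => 0
  | some (.white, .pawn) => r - n
  | some (.black, .pawn) => -1 - r
  | some (_, _) => -n

def MM {n : ℕ} (b : Board n) : ℤ := ∑ s : Sq n, gw n (Y s) (b s)

theorem Y_nonneg {n : ℕ} (s : Sq n) : 0 ≤ Y s := by unfold Y; positivity
theorem Y_lt {n : ℕ} (s : Sq n) : Y s < n := by unfold Y; exact_mod_cast s.2.isLt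

theorem gw_neg {n : ℕ} (s : Sq n) (c : Color) (p : Piece) : gw n (Y s) (some (c, p)) < 0 := by
  have h1 := Y_nonneg s
  have h2 := Y_lt s
  cases c <;> cases p <;> simp only [gw] <;> omega

theorem gw_le {n : ℕ} (s : Sq n) (o : Option (Color × Piece)) : gw n (Y s) o ≤ 0 := by
  rcases o with _ | ⟨c, p⟩
  · simp [gw]
  · exact (gw_neg s c p).le

theorem gw_const {n : ℕ} (r r' : ℤ) (c : Color) (p : Piece) (hp : p ≠ .pawn) :
    gw n r (some (c, p)) = gw n r' (some (c, p)) := by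
  cases c <;> cases p <;> simp_all [gw]

theorem MM_after {n : ℕ} (b : Board n) (s t : Sq n) (h : s ≠ t) :
    MM (boardAfter b s t) = MM b - gw n (Y s) (b s) - gw n (Y t) (b t) + gw n (Y t) (b s) := by
  have key : ∀ u, gw n (Y u) (boardAfter b s t u) = gw n (Y u) (b u)
      + ((if u = s then - gw n (Y s) (b s) else 0)
      + (if u = t then gw n (Y t) (b s) - gw n (Y t) (b t) else 0)) := by
    intro u
    unfold boardAfter
    by_cases h1 : u = t
    · subst h1
      have : u ≠ s := fun h' => h h'.symm
      simp [this]
    · by_cases h2 : u = s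
      · subst h2
        simp [h1, gw]
      · simp [h1, h2]
  unfold MM
  rw [Finset.sum_congr rfl (fun u _ => key u), Finset.sum_add_distrib, Finset.sum_add_distrib]
  simp
  ring

theorem MM_move {n : ℕ} {b : Board n} {c : Color} {p : Piece} {s t : Sq n}
    (hs : b s = some (c, p)) (ht : ∀ q, b t ≠ some (c, q)) (hm : MovePattern b c p s t) :
    MM b ≤ MM (boardAfter b s t) ∧
      (MM (boardAfter b s t) = MM b → b t = none ∧ p ≠ .pawn) ∧
      (b t = none → p ≠ .pawn → MM (boardAfter b s t) = MM b) := by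
  have hne : s ≠ t := by
    rintro rfl
    exact ht p hs
  rw [MM_after b s t hne, hs]
  by_cases hp : p = .pawn
  · subst hp
    have h1 : gw n (Y t) (some (c, Piece.pawn)) = gw n (Y s) (some (c, Piece.pawn)) + 1 := by
      have : Y t - Y s = forward c := by
        rcases hm with h | h
        · exact h.2.1
        · exact h.2.1
      cases c <;> simp only [gw, forward] at this ⊢ <;> omega
    have h2 := gw_le t (b t)
    refine ⟨by omega, fun h => ?_, fun _ h => absurd rfl h⟩
    omega
  · have h1 := gw_const (n := n) (Y s) (Y t) c p hp
    have h2 := gw_le t (b t)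
    refine ⟨by omega, fun h => ⟨?_, hp⟩, fun h _ => ?_⟩
    · rcases hb : b t with _ | ⟨c', q⟩
      · rfl
      · have := gw_neg t c' q
        rw [hb] at h
        omega
    · rw [h]
      simp only [gw] at *
      omega

theorem MM_legal {n : ℕ} {P Q : Position n} (h : LegalMove P Q) : MM P.board ≤ MM Q.board := by
  obtain ⟨s, t, p, hs, ht, hm, hQ, _, _⟩ := h
  rw [hQ]
  exact (MM_move hs ht hm).1

theorem MM_steps {n : ℕ} : ∀ (N : ℕ) {P Q : Position n}, Steps N P Q → MM P.board ≤ MM Q.board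
  | 0, P, Q, h => by
    have h : P = Q := h
    rw [h]
  | N + 1, P, Q, h => by
    obtain ⟨C, h1, h2⟩ := h
    exact (MM_legal h1).trans (MM_steps N h2)

/-! The board. -/

open Classical in
noncomputable def ct (m : ℕ) (E : ℕ → ℕ) (x y : ℕ) : ℕ :=
  if h : ∃ p : ℕ × ℕ, p.1 ≤ m ∧ p.2 < 22 ∧ px p.1 p.2 = x ∧ py p.1 p.2 = y then
    tok (E h.choose.1) h.choose.2 else 4

theorem ct_cell {m : ℕ} (E : ℕ → ℕ) {i k : ℕ} (hi : i ≤ m) (hk : k < 22) :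
    ct m E (px i k) (py i k) = tok (E i) k := by
  have h : ∃ p : ℕ × ℕ, p.1 ≤ m ∧ p.2 < 22 ∧ px p.1 p.2 = px i k ∧ py p.1 p.2 = py i k :=
    ⟨(i, k), hi, hk, rfl, rfl⟩
  unfold ct
  rw [dif_pos h]
  obtain ⟨_, h2, h3, h4⟩ := h.choose_spec
  obtain ⟨e1, e2⟩ := pos_inj h2 hk h3 h4
  rw [e1, e2]

theorem ct_not {m : ℕ} (E : ℕ → ℕ) {x y : ℕ}
    (h : ∀ i k, i ≤ m → k < 22 → px i k = x → py i k = y → False) : ct m E x y = 4 := by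
  unfold ct
  rw [dif_neg]
  rintro ⟨p, h1, h2, h3, h4⟩
  exact h _ _ h1 h2 h3 h4

theorem ct_cases (m : ℕ) (E : ℕ → ℕ) (x y : ℕ) :
    (∃ i k, i ≤ m ∧ k < 22 ∧ px i k = x ∧ py i k = y ∧ ct m E x y = tok (E i) k) ∨
    ((∀ i k, i ≤ m → k < 22 → px i k = x → py i k = y → False) ∧ ct m E x y = 4) := by
  by_cases h : ∃ i k, i ≤ m ∧ k < 22 ∧ px i k = x ∧ py i k = y
  · obtain ⟨i, k, h1, h2, rfl, rfl⟩ := h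
    exact Or.inl ⟨i, k, h1, h2, rfl, rfl, ct_cell E h1 h2⟩
  · right
    have h' : ∀ i k, i ≤ m → k < 22 → px i k = x → py i k = y → False :=
      fun i k h1 h2 h3 h4 => h ⟨i, k, h1, h2, h3, h4⟩
    exact ⟨h', ct_not E h'⟩

def pc : ℕ → Option (Color × Piece)
  | 0 => some (.white, .knight)
  | 1 => some (.white, .rook)
  | 2 => some (.white, .bishop)
  | 3 => none
  | _ => some (.white, .pawn)

theorem pc_inj {a b : ℕ} (ha : a < 4) (hb : b < 4) (h : pc a = pc b) : a = b := by
  interval_cases a <;> interval_cases b <;> simp_all [pc]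

noncomputable def bd (n m : ℕ) (E : ℕ → ℕ) (kx : ℕ) : Board n := fun s =>
  if s.2.val = 0 then (if s.1.val = kx then some (.black, .king) else none)
  else if s.2.val = n - 1 then none
  else if s.1.val = 3 ∧ s.2.val = 20 then some (.white, .king)
  else pc (ct m E s.1.val s.2.val)

theorem py_bnd (i k : ℕ) (hk : k < 22) : 3 ≤ py i k ∧ py i k ≤ 12 :=
  ⟨(bnd i k hk).2.1, (bnd i k hk).2.2.1⟩

theorem px_bnd {i m n : ℕ} (k : ℕ) (hk : k < 22) (hi : i ≤ m) (hm : 8 * m + 11 < n) :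
    px i k < n := by
  have := (bnd i k hk).1
  unfold px
  omega

section
variable {n m : ℕ} {E : ℕ → ℕ} {kx : ℕ}

theorem bd_cell (hn : 40 ≤ n) {s : Sq n} {i k : ℕ} (hi : i ≤ m) (hk : k < 22)
    (h1 : s.1.val = px i k) (h2 : s.2.val = py i k) : bd n m E kx s = pc (tok (E i) k) := by
  have := py_bnd i k hk
  unfold bd
  rw [if_neg (by omega), if_neg (by omega), if_neg (by omega), h1, h2, ct_cell E hi hk]

theorem bd_rank0 {s : Sq n} (h : s.2.val = 0) :
    bd n m E kx s = if s.1.val = kx then some (.black, .king) else none := by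
  unfold bd
  rw [if_pos h]

theorem bd_other {s : Sq n} (h0 : s.2.val ≠ 0) (h1 : s.2.val ≠ n - 1)
    (h2 : ¬ (s.1.val = 3 ∧ s.2.val = 20))
    (h : ∀ i k, i ≤ m → k < 22 → px i k = s.1.val → py i k = s.2.val → False) :
    bd n m E kx s = some (.white, .pawn) := by
  unfold bd
  rw [if_neg h0, if_neg h1, if_neg h2, ct_not E h]
  rfl

/-- Complete description of the squares of the board. -/
theorem bd_class (hn : 40 ≤ n) (s : Sq n) :
    (s.2.val = 0 ∧ s.1.val = kx ∧ bd n m E kx s = some (.black, .king)) ∨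
    (s.2.val = 0 ∧ s.1.val ≠ kx ∧ bd n m E kx s = none) ∨
    (s.2.val = n - 1 ∧ bd n m E kx s = none) ∨
    (s.1.val = 3 ∧ s.2.val = 20 ∧ bd n m E kx s = some (.white, .king)) ∨
    (∃ i k, i ≤ m ∧ k < 22 ∧ s.1.val = px i k ∧ s.2.val = py i k ∧
      bd n m E kx s = pc (tok (E i) k)) ∨
    (1 ≤ s.2.val ∧ s.2.val ≠ n - 1 ∧ bd n m E kx s = some (.white, .pawn)) := by
  by_cases h0 : s.2.val = 0
  · have := bd_rank0 (m := m) (E := E) (kx := kx) h0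
    by_cases h : s.1.val = kx
    · rw [if_pos h] at this
      exact Or.inl ⟨h0, h, this⟩
    · rw [if_neg h] at this
      exact Or.inr (Or.inl ⟨h0, h, this⟩)
  right; right
  by_cases h1 : s.2.val = n - 1
  · left
    refine ⟨h1, ?_⟩
    unfold bd
    rw [if_neg h0, if_pos h1]
  right
  by_cases h2 : s.1.val = 3 ∧ s.2.val = 20
  · left
    refine ⟨h2.1, h2.2, ?_⟩
    unfold bd
    rw [if_neg h0, if_neg h1, if_pos h2]
  right
  by_cases h : ∃ i k, i ≤ m ∧ k < 22 ∧ px i k = s.1.val ∧ py i k = s.2.val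
  · obtain ⟨i, k, hi, hk, e1, e2⟩ := h
    exact Or.inl ⟨i, k, hi, hk, e1.symm, e2.symm, bd_cell hn hi hk e1.symm e2.symm⟩
  · right
    refine ⟨by omega, h1, bd_other h0 h1 h2 fun i k a b c d => h ⟨i, k, a, b, c, d⟩⟩

theorem pc_cases {a : ℕ} (ha : a < 4) :
    (a = 0 ∧ pc a = some (.white, .knight)) ∨ (a = 1 ∧ pc a = some (.white, .rook)) ∨
    (a = 2 ∧ pc a = some (.white, .bishop)) ∨ (a = 3 ∧ pc a = none) := by
  interval_cases a <;> simp [pc]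

theorem bd_low (hn : 40 ≤ n) {s : Sq n} (h : s.2.val = 1) :
    bd n m E kx s = some (.white, .pawn) := by
  refine bd_other (by omega) (by omega) (by omega) fun i k _ hk _ h4 => ?_
  have := py_bnd i k hk
  omega

theorem bd_black (hn : 40 ≤ n) {s : Sq n} {p : Piece}
    (h : bd n m E kx s = some (.black, p)) : p = .king ∧ s.2.val = 0 ∧ s.1.val = kx := by
  rcases bd_class (m := m) (E := E) (kx := kx) hn s with
    ⟨a, b, e⟩ | ⟨a, b, e⟩ | ⟨a, e⟩ | ⟨a, b, e⟩ | ⟨i, k, hi, hk, a, b, e⟩ | ⟨a, b, e⟩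
  · rw [e] at h
    simp at h
    exact ⟨h.symm, a, b⟩
  · simp [e] at h
  · simp [e] at h
  · simp [e] at h
  · rcases pc_cases (tok_lt (E i) k) with ⟨_, h'⟩ | ⟨_, h'⟩ | ⟨_, h'⟩ | ⟨_, h'⟩ <;>
      simp [e, h'] at h
  · simp [e] at h

theorem bd_white (hn : 40 ≤ n) {s : Sq n} {p : Piece}
    (h : bd n m E kx s = some (.white, p)) :
    (p = .king ∧ s.1.val = 3 ∧ s.2.val = 20) ∨ (p = .pawn ∧ 1 ≤ s.2.val ∧ s.2.val ≠ n - 1) ∨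
    (∃ i k, i ≤ m ∧ k < 22 ∧ s.1.val = px i k ∧ s.2.val = py i k ∧
      ((p = .knight ∧ tok (E i) k = 0) ∨ (p = .rook ∧ tok (E i) k = 1) ∨
        (p = .bishop ∧ tok (E i) k = 2))) := by
  rcases bd_class (m := m) (E := E) (kx := kx) hn s with
    ⟨a, b, e⟩ | ⟨a, b, e⟩ | ⟨a, e⟩ | ⟨a, b, e⟩ | ⟨i, k, hi, hk, a, b, e⟩ | ⟨a, b, e⟩
  · simp [e] at h
  · simp [e] at h
  · simp [e] at h
  · simp [e] at h
    exact Or.inl ⟨h.symm, a, b⟩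
  · right; right
    refine ⟨i, k, hi, hk, a, b, ?_⟩
    rcases pc_cases (tok_lt (E i) k) with ⟨h1, h'⟩ | ⟨h1, h'⟩ | ⟨h1, h'⟩ | ⟨h1, h'⟩ <;>
      rw [e, h'] at h <;> simp at h <;> simp [h1, h.symm]
  · simp [e] at h
    exact Or.inr (Or.inl ⟨h.symm, a, b⟩)

theorem bd_none (hn : 40 ≤ n) {s : Sq n} (h : bd n m E kx s = none) (h0 : s.2.val ≠ 0)
    (h1 : s.2.val ≠ n - 1) :
    ∃ i k, i ≤ m ∧ k < 22 ∧ s.1.val = px i k ∧ s.2.val = py i k ∧ tok (E i) k = 3 := by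
  rcases bd_class (m := m) (E := E) (kx := kx) hn s with
    ⟨a, b, e⟩ | ⟨a, b, e⟩ | ⟨a, e⟩ | ⟨a, b, e⟩ | ⟨i, k, hi, hk, a, b, e⟩ | ⟨a, b, e⟩
  · simp [e] at h
  · exact absurd a h0
  · exact absurd a h1
  · simp [e] at h
  · refine ⟨i, k, hi, hk, a, b, ?_⟩
    rcases pc_cases (tok_lt (E i) k) with ⟨h1, h'⟩ | ⟨h1, h'⟩ | ⟨h1, h'⟩ | ⟨h1, h'⟩ <;>
      rw [e, h'] at h <;> simp at h
    exact h1
  · simp [e] at h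

theorem nc_white (hn : 40 ≤ n) : ¬ InCheck (bd n m E kx) .white := by
  rintro ⟨ks, s, p, h1, h2, h3⟩
  obtain ⟨rfl, a, b⟩ := bd_black hn h2
  rcases bd_white hn h1 with ⟨_, c, d⟩ | ⟨h, _⟩ | ⟨i, k, _, _, _, _, h⟩
  · have := h3.2.2
    unfold Y at this
    rw [abs_le] at this
    omega
  · simp at h
  · simp at h

theorem nc_black (hn : 40 ≤ n) : ¬ InCheck (bd n m E kx) .black := by
  rintro ⟨ks, s, p, h1, h2, h3⟩
  obtain ⟨-, a, b⟩ := bd_black hn h1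
  have e : (Color.black).other = Color.white := rfl
  rw [e] at h2 h3
  have hY : Y ks = 0 := by unfold Y; simp [a]
  rcases bd_white hn h2 with ⟨rfl, c, d⟩ | ⟨rfl, h, _⟩ | ⟨i, k, _, hk, hx, hy, h⟩
  · have := h3.2.2
    rw [hY, abs_le] at this
    unfold Y at this
    omega
  · have := h3.2
    rw [hY] at this
    simp only [forward, Y] at this
    omega
  · have hb := py_bnd i k hk
    have hYs : 3 ≤ Y s := by unfold Y; omega
    have hXs : 0 ≤ X s ∧ X s < n := by unfold X; have := s.1.isLt; omega
    have hXk : 0 ≤ X ks ∧ X ks < n := by unfold X; have := ks.1.isLt; omega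
    have mkU : ∀ x : ℤ, 0 ≤ x → x < n → ∃ u : Sq n, X u = x ∧ Y u = 1 := by
      intro x hx0 hx1
      refine ⟨(⟨x.toNat, by omega⟩, ⟨1, by omega⟩), ?_, ?_⟩ <;> simp [X, Y] <;> omega
    have fin : ∀ u : Sq n, Y u = 1 → Clear (bd n m E kx) s ks → StrictBtw s ks u → False := by
      intro u hu hc hs
      have h5 := hc u hs
      rw [bd_low hn (by unfold Y at hu; omega)] at h5
      simp at h5
    have ne : ∀ u v : Sq n, Y u ≠ Y v → u ≠ v := by
      rintro u v h rfl
      exact h rfl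
    rcases h with ⟨rfl, _⟩ | ⟨rfl, _⟩ | ⟨rfl, _⟩
    · have h3 : KnightStep s ks := h3
      unfold KnightStep at h3
      rw [hY] at h3
      rcases h3 with ⟨_, h3⟩ | ⟨_, h3⟩ <;> rw [abs_of_neg (by omega)] at h3 <;> omega
    · obtain ⟨⟨_, h4⟩, hc⟩ := h3
      have hX : X s = X ks := by
        rcases h4 with h4 | h4 <;> omega
      obtain ⟨u, u1, u2⟩ := mkU (X ks) hXk.1 hXk.2
      refine fin u u2 hc ⟨?_, ne _ _ (by omega), ne _ _ (by omega), ?_, ?_, ?_, ?_⟩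
      · rw [u1, hX]; ring
      all_goals omega
    · obtain ⟨⟨_, h4⟩, hc⟩ := h3
      rw [hY, zero_sub, abs_neg, abs_of_pos (by omega : 0 < Y s)] at h4
      rcases le_total 0 (X ks - X s) with h6 | h6
      · rw [abs_of_nonneg h6] at h4
        obtain ⟨u, u1, u2⟩ := mkU (X ks - 1) (by omega) (by omega)
        refine fin u u2 hc ⟨?_, ne _ _ (by omega), ne _ _ (by omega), ?_, ?_, ?_, ?_⟩
        · rw [u1, u2, hY, ← h4]; ring
        all_goals omega
      · rw [abs_of_nonpos h6] at h4
        obtain ⟨u, u1, u2⟩ := mkU (X ks + 1) (by omega) (by omega)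
        refine fin u u2 hc ⟨?_, ne _ _ (by omega), ne _ _ (by omega), ?_, ?_, ?_, ?_⟩
        · rw [u1, u2, hY, ← h4]; ring
        all_goals omega

theorem nc (hn : 40 ≤ n) (c : Color) : ¬ InCheck (bd n m E kx) c := by
  cases c
  · exact nc_white hn
  · exact nc_black hn

noncomputable def mk (n m : ℕ) (E : ℕ → ℕ) (kx : ℕ) (c : Color) : Position n := ⟨bd n m E kx, c⟩

theorem legal_mk (hn : 40 ≤ n) (hkx : kx < n) (c : Color) : LegalPos (mk n m E kx c) := by
  refine ⟨?_, nc hn _, ?_⟩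
  · rintro (_ | _)
    · refine ⟨(⟨3, by omega⟩, ⟨20, by omega⟩), ?_, ?_⟩
      · simp only [mk, bd]
        rw [if_neg (by simp), if_neg (by omega), if_pos (by simp)]
      · intro s hs
        rcases bd_white hn hs with ⟨_, c, d⟩ | ⟨h, _⟩ | ⟨i, k, _, _, _, _, h⟩
        · ext <;> simp [c, d]
        · simp at h
        · simp at h
    · refine ⟨(⟨kx, hkx⟩, ⟨0, by omega⟩), ?_, ?_⟩
      · simp only [mk]
        rw [bd_rank0 (by simp), if_pos (by simp)]
      · intro s hs
        obtain ⟨_, c, d⟩ := bd_black hn hs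
        ext <;> simp [c, d]
  · rintro s (_ | _) hs
    · rcases bd_white hn hs with ⟨h, _⟩ | ⟨_, h1, h2⟩ | ⟨i, k, _, _, _, _, h⟩
      · simp at h
      · exact ⟨by omega, h2⟩
      · simp at h
    · have := (bd_black hn hs).1
      simp at this
end

end Strip


namespace Strip
open Chess
set_option autoImplicit false

section
variable {n m : ℕ} {E E' : ℕ → ℕ} {kx : ℕ}

theorem swap_board (hn : 40 ≤ n) {i k j k' : ℕ} (h : SwapAt m E E' i k j k') {s t : Sq n}
    (s1 : s.1.val = px j k') (s2 : s.2.val = py j k')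
    (t1 : t.1.val = px i k) (t2 : t.2.val = py i k) :
    boardAfter (bd n m E kx) s t = bd n m E' kx := by
  obtain ⟨hi, hj, hk, hk', h3, hne, -, hE⟩ := h
  funext u
  unfold boardAfter
  by_cases ut : u = t
  · subst ut
    rw [if_pos rfl, bd_cell hn hj hk' s1 s2, bd_cell hn hi hk t1 t2, hE i hi k hk, if_pos ⟨rfl, rfl⟩]
  · rw [if_neg ut]
    by_cases us : u = s
    · subst us
      rw [if_pos rfl, bd_cell hn hj hk' s1 s2, hE j hj k' hk', if_neg, if_pos ⟨rfl, rfl⟩]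
      · rfl
      · rintro ⟨rfl, rfl⟩
        exact hne h3
    · rw [if_neg us]
      have : ct m E u.1.val u.2.val = ct m E' u.1.val u.2.val := by
        rcases ct_cases m E u.1.val u.2.val with ⟨a, b, ha, hb, e1, e2, e⟩ | ⟨h, e⟩
        · have e' := ct_cell E' ha hb
          rw [e1, e2, hE a ha b hb, if_neg, if_neg] at e'
          · rw [e, e']
          · rintro ⟨rfl, rfl⟩
            apply us
            ext <;> omega
          · rintro ⟨rfl, rfl⟩
            apply ut
            ext <;> omega
        · rw [e, ct_not E' h]
      unfold bd
      rw [this]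

theorem dn_abs (a b : ℕ) : (dn a b : ℤ) = |(b : ℤ) - a| := by
  unfold dn
  rcases le_total a b with h | h
  · rw [abs_of_nonneg (by omega)]
    omega
  · rw [abs_of_nonpos (by omega)]
    omega

theorem kd0 {a b : ℕ} : kd a b = 0 ↔ (a = 1 ∧ b = 2) ∨ (a = 2 ∧ b = 1) := by
  unfold kd
  split_ifs <;> constructor <;> intro h <;> first | omega | simp_all
theorem kd1 {a b : ℕ} : kd a b = 1 ↔ (a = 0 ∧ b = 1) ∨ (a = 1 ∧ b = 0) := by
  unfold kd
  split_ifs <;> constructor <;> intro h <;> first | omega | simp_all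
theorem kd2 {a b : ℕ} : kd a b = 2 ↔ (a = 1 ∧ b = 1) := by
  unfold kd
  split_ifs <;> constructor <;> intro h <;> first | omega | simp_all

/-- no square strictly between adjacent squares -/
theorem clear_adj (b : Board n) {s t : Sq n} (h1 : |X t - X s| ≤ 1) (h2 : |Y t - Y s| ≤ 1) :
    Clear b s t := by
  rintro u ⟨h, hs, ht, a1, a2, a3, a4⟩
  exfalso
  rw [abs_le] at h1 h2
  have hs' : ¬ (X u = X s ∧ Y u = Y s) := by
    rintro ⟨e1, e2⟩
    unfold X at e1
    unfold Y at e2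
    apply hs
    ext <;> omega
  have ht' : ¬ (X u = X t ∧ Y u = Y t) := by
    rintro ⟨e1, e2⟩
    unfold X at e1
    unfold Y at e2
    apply ht
    ext <;> omega
  generalize X u = xu at *
  generalize Y u = yu at *
  generalize X s = xs at *
  generalize Y s = ys at *
  obtain ⟨dx, hdx⟩ : ∃ d, X t = xs + d := ⟨X t - xs, by ring⟩
  obtain ⟨dy, hdy⟩ : ∃ d, Y t = ys + d := ⟨Y t - ys, by ring⟩
  generalize X t = xt at *
  generalize Y t = yt at *
  subst hdx hdy
  have c1 : dx = -1 ∨ dx = 0 ∨ dx = 1 := by omega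
  have c2 : dy = -1 ∨ dy = 0 ∨ dy = 1 := by omega
  rcases c1 with rfl | rfl | rfl <;> rcases c2 with rfl | rfl | rfl <;> ring_nf at h <;> omega

theorem legal_white (hn : 40 ≤ n) (hm : 8 * m + 11 < n) (h : Sw m E E') :
    LegalMove (mk n m E kx .white) (mk n m E' kx .black) ∧
      MM (bd n m E' kx) = MM (bd n m E kx) := by
  obtain ⟨i, k, j, k', h⟩ := h
  have h' := h
  obtain ⟨hi, hj, hk, hk', h3, hne, hkd, hE⟩ := h'
  have bi := py_bnd i k hk
  have bj := py_bnd j k' hk'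
  let t : Sq n := (⟨px i k, px_bnd k hk hi hm⟩, ⟨py i k, by omega⟩)
  let s : Sq n := (⟨px j k', px_bnd k' hk' hj hm⟩, ⟨py j k', by omega⟩)
  have e := swap_board (kx := kx) hn h (s := s) (t := t) rfl rfl rfl rfl
  have ht : bd n m E kx t = none := by
    rw [bd_cell hn hi hk rfl rfl, h3]; rfl
  have hst : s ≠ t := by
    intro hst
    have e1 : px j k' = px i k := congrArg (fun u : Sq n => u.1.val) hst
    have e2 : py j k' = py i k := congrArg (fun u : Sq n => u.2.val) hst
    obtain ⟨rfl, rfl⟩ := pos_inj hk' hk e1 e2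
    exact hne h3
  have dX : |X t - X s| = dn (px i k) (px j k') := by
    rw [dn_abs, abs_sub_comm]; rfl
  have dY : |Y t - Y s| = dn (py i k) (py j k') := by
    rw [dn_abs, abs_sub_comm]; rfl
  have main : ∃ p, bd n m E kx s = some (.white, p) ∧ p ≠ .pawn ∧
      MovePattern (bd n m E kx) .white p s t := by
    rcases pc_cases (tok_lt (E j) k') with ⟨h1, h'⟩ | ⟨h1, h'⟩ | ⟨h1, h'⟩ | ⟨h1, h'⟩
    · refine ⟨.knight, by rw [bd_cell hn hj hk' rfl rfl, h'], by simp, ?_⟩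
      rw [h1, kd0] at hkd
      show KnightStep s t
      unfold KnightStep
      rw [dX, dY]
      omega
    · refine ⟨.rook, by rw [bd_cell hn hj hk' rfl rfl, h'], by simp, ?_⟩
      rw [h1, kd1] at hkd
      refine ⟨⟨hst, ?_⟩, clear_adj _ (by omega) (by omega)⟩
      rcases hkd with ⟨a, b⟩ | ⟨a, b⟩
      · left
        rw [a] at dX
        have := abs_eq_zero.1 dX
        omega
      · right
        rw [b] at dY
        have := abs_eq_zero.1 dY
        omega
    · refine ⟨.bishop, by rw [bd_cell hn hj hk' rfl rfl, h'], by simp, ?_⟩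
      rw [h1, kd2] at hkd
      exact ⟨⟨hst, by omega⟩, clear_adj _ (by omega) (by omega)⟩
    · exact absurd h1 hne
  obtain ⟨p, hp, hpp, hmv⟩ := main
  have hq : ∀ q, bd n m E kx t ≠ some (.white, q) := by
    intro q
    rw [ht]
    simp
  refine ⟨⟨s, t, p, hp, hq, hmv, e.symm, rfl, nc hn _⟩, ?_⟩
  rw [← e]
  exact (MM_move hp hq hmv).2.2 ht hpp

theorem king_board {s t : Sq n} {kx' : ℕ} (hs2 : s.2.val = 0) (hs1 : s.1.val = kx)
    (ht2 : t.2.val = 0) (ht1 : t.1.val = kx') (hne : kx ≠ kx') :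
    boardAfter (bd n m E kx) s t = bd n m E kx' := by
  funext u
  unfold boardAfter
  by_cases ut : u = t
  · subst ut
    rw [if_pos rfl, bd_rank0 hs2, bd_rank0 ht2, if_pos hs1, if_pos ht1]
  · rw [if_neg ut]
    by_cases us : u = s
    · subst us
      rw [if_pos rfl, bd_rank0 hs2, if_neg (by omega)]
    · rw [if_neg us]
      by_cases h0 : u.2.val = 0
      · rw [bd_rank0 h0, bd_rank0 h0, if_neg, if_neg]
        · intro h
          apply ut
          ext <;> omega
        · intro h
          apply us
          ext <;> omega
      · unfold bd
        rw [if_neg h0, if_neg h0]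

theorem legal_black (hn : 40 ≤ n) (hkx : kx ≤ 1) :
    LegalMove (mk n m E kx .black) (mk n m E (1 - kx) .white) ∧
      MM (bd n m E (1 - kx)) = MM (bd n m E kx) := by
  let s : Sq n := (⟨kx, by omega⟩, ⟨0, by omega⟩)
  let t : Sq n := (⟨1 - kx, by omega⟩, ⟨0, by omega⟩)
  have e := king_board (m := m) (E := E) (s := s) (t := t) (kx := kx) (kx' := 1 - kx)
    rfl rfl rfl rfl (by omega)
  have hs : bd n m E kx s = some (.black, .king) := by
    rw [bd_rank0 rfl, if_pos rfl]
  have ht : bd n m E kx t = none := by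
    rw [bd_rank0 rfl, if_neg (by simp only [t]; omega)]
  have hq : ∀ q, bd n m E kx t ≠ some (.black, q) := by
    intro q
    rw [ht]
    simp
  have hmv : MovePattern (bd n m E kx) .black .king s t := by
    refine ⟨?_, ?_, ?_⟩
    · intro h
      have : kx = 1 - kx := congrArg (fun u : Sq n => u.1.val) h
      omega
    · rw [abs_le]
      simp only [X, s, t]
      omega
    · simp [Y, s, t]
  refine ⟨⟨s, t, .king, hs, hq, hmv, e.symm, rfl, nc hn _⟩, ?_⟩
  rw [← e]
  exact (MM_move hs hq hmv).2.2 ht (by simp)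

theorem exist_steps (hn : 40 ≤ n) (hm : 8 * m + 11 < n) {E2 : ℕ → ℕ} (h : Reach m E E2) :
    ∀ kx ≤ 1, ∃ N kx', kx' ≤ 1 ∧ Steps N (mk n m E kx .white) (mk n m E2 kx' .white) ∧
      MM (bd n m E2 kx') = MM (bd n m E kx) := by
  induction h using Relation.ReflTransGen.head_induction_on with
  | refl => exact fun kx hk => ⟨0, kx, hk, rfl, rfl⟩
  | head h _ ih =>
    intro kx hk
    obtain ⟨N, kx', h1, h2, h3⟩ := ih (1 - kx) (by omega)
    obtain ⟨a1, a2⟩ := legal_white (kx := kx) hn hm h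
    obtain ⟨b1, b2⟩ := legal_black (m := m) (E := _) hn hk
    exact ⟨N + 2, kx', h1, ⟨_, a1, _, b1, h2⟩, by rw [h3, b2, a2]⟩

theorem X_def (s : Sq n) : X s = (s.1.val : ℤ) := rfl
theorem Y_def (s : Sq n) : Y s = (s.2.val : ℤ) := rfl

/-- a slide from a cell has length one -/
theorem slide {F : ℕ → ℕ} {i h w : ℕ} (I : Inv m E F i h w) (hn : 40 ≤ n)
    {s t : Sq n} (hy : 3 ≤ Y s ∧ Y s ≤ 12)
    (hl : (X s = X t ∨ Y s = Y t) ∨ |X t - X s| = |Y t - Y s|)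
    (ht : bd n m E kx t = none) (hc : Clear (bd n m E kx) s t) :
    |X t - X s| ≤ 1 ∧ |Y t - Y s| ≤ 1 := by
  by_contra hcon
  have hXs : 0 ≤ X s ∧ X s < n := by rw [X_def]; have := s.1.isLt; omega
  have hXt : 0 ≤ X t ∧ X t < n := by rw [X_def]; have := t.1.isLt; omega
  have hYt := Y_nonneg t
  have hYt' := Y_lt t
  obtain ⟨L, dx, dy, hL, hdx, hdy, ex, ey⟩ : ∃ L dx dy : ℤ, 2 ≤ L ∧ (-1 ≤ dx ∧ dx ≤ 1) ∧
      (-1 ≤ dy ∧ dy ≤ 1) ∧ X t = X s + L * dx ∧ Y t = Y s + L * dy := by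
    rw [abs_le, abs_le] at hcon
    rcases hl with (h | h) | h
    · rcases le_total (Y s) (Y t) with g | g
      · exact ⟨Y t - Y s, 0, 1, by omega, by omega, by omega, by omega, by omega⟩
      · exact ⟨Y s - Y t, 0, -1, by omega, by omega, by omega, by omega, by omega⟩
    · rcases le_total (X s) (X t) with g | g
      · exact ⟨X t - X s, 1, 0, by omega, by omega, by omega, by omega, by omega⟩
      · exact ⟨X s - X t, -1, 0, by omega, by omega, by omega, by omega, by omega⟩
    · rcases le_total (X s) (X t) with g | g <;> rcases le_total (Y s) (Y t) with g' | g'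
      · rw [abs_of_nonneg (by omega), abs_of_nonneg (by omega)] at h
        exact ⟨X t - X s, 1, 1, by omega, by omega, by omega, by omega, by omega⟩
      · rw [abs_of_nonneg (by omega), abs_of_nonpos (by omega)] at h
        exact ⟨X t - X s, 1, -1, by omega, by omega, by omega, by omega, by omega⟩
      · rw [abs_of_nonpos (by omega), abs_of_nonneg (by omega)] at h
        exact ⟨X s - X t, -1, 1, by omega, by omega, by omega, by omega, by omega⟩
      · rw [abs_of_nonpos (by omega), abs_of_nonpos (by omega)] at h
        exact ⟨X s - X t, -1, -1, by omega, by omega, by omega, by omega, by omega⟩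
  have hd0 : dx ≠ 0 ∨ dy ≠ 0 := by
    by_contra h0
    push Not at h0
    rw [h0.1] at ex
    rw [h0.2] at ey
    apply hcon
    rw [ex, ey]
    simp
  have cdx : dx = -1 ∨ dx = 0 ∨ dx = 1 := by omega
  have cdy : dy = -1 ∨ dy = 0 ∨ dy = 1 := by omega
  have pt : ∀ l : ℤ, 1 ≤ l → l ≤ 2 → ∃ u : Sq n, X u = X s + l * dx ∧ Y u = Y s + l * dy ∧
      bd n m E kx u = none := by
    intro l h1 h2
    have bx : 0 ≤ X s + l * dx ∧ X s + l * dx < n := by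
      rcases cdx with rfl | rfl | rfl <;> omega
    have by' : 0 ≤ Y s + l * dy ∧ Y s + l * dy < n := by
      rcases cdy with rfl | rfl | rfl <;> omega
    obtain ⟨u, u1, u2⟩ : ∃ u : Sq n, X u = X s + l * dx ∧ Y u = Y s + l * dy := by
      refine ⟨(⟨(X s + l * dx).toNat, by omega⟩, ⟨(Y s + l * dy).toNat, by omega⟩), ?_, ?_⟩
      · rw [X_def]; simp; omega
      · rw [Y_def]; simp; omega
    refine ⟨u, u1, u2, ?_⟩
    by_cases hut : u = t
    · rw [hut, ht]
    apply hc u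
    have hus : u ≠ s := by
      rintro rfl
      rcases hd0 with h | h
      · rcases cdx with rfl | rfl | rfl <;> omega
      · rcases cdy with rfl | rfl | rfl <;> omega
    refine ⟨?_, hus, hut, ?_⟩
    · rw [u1, u2, ex, ey]; ring
    · rw [u1, u2, ex, ey]
      rcases cdx with rfl | rfl | rfl <;> rcases cdy with rfl | rfl | rfl <;> omega
  obtain ⟨u, u1, u2, u3⟩ := pt 1 (by norm_num) (by norm_num)
  obtain ⟨v, v1, v2, v3⟩ := pt 2 (by norm_num) (by norm_num)
  rw [Y_def u] at u2
  rw [Y_def v] at v2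
  rw [X_def u] at u1
  rw [X_def v] at v1
  obtain ⟨a, b, ha, hb, c1, c2, c3⟩ := bd_none hn u3 (by omega) (by omega)
  obtain ⟨a', b', ha', hb', c1', c2', c3'⟩ := bd_none hn v3 (by omega) (by omega)
  obtain ⟨rfl, rfl⟩ := I.uniq ha hb c3 ha' hb' c3'
  omega

theorem back_white {F : ℕ → ℕ} {i h w : ℕ} (I : Inv m E F i h w) (hn : 40 ≤ n)
    {Q : Position n} (hQ : LegalMove (mk n m E kx .white) Q)
    (hM : MM Q.board = MM (bd n m E kx)) :
    ∃ E' F' i' h' w', Inv m E' F' i' h' w' ∧ Q = mk n m E' kx .black ∧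
      |Phi m E' - Phi m E| ≤ 1 := by
  obtain ⟨s, t, p, hs, hq, hmv, hb, hto, -⟩ := hQ
  have hs : bd n m E kx s = some (.white, p) := hs
  have hq : ∀ q, bd n m E kx t ≠ some (.white, q) := hq
  have hmv : MovePattern (bd n m E kx) .white p s t := hmv
  have hb : Q.board = boardAfter (bd n m E kx) s t := hb
  rw [hb] at hM
  obtain ⟨ht, hp⟩ := (MM_move hs hq hmv).2.1 hM
  have hYt := Y_nonneg t
  have hYt' := Y_lt t
  rcases bd_white hn hs with ⟨rfl, a1, a2⟩ | ⟨rfl, _⟩ | ⟨j, k', hj, hk', s1, s2, hpk⟩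
  · have h1 := hmv.2.2
    rw [Y_def, Y_def, abs_le] at h1
    obtain ⟨a, b, ha, hb, c1, c2, c3⟩ := bd_none hn ht (by omega) (by omega)
    have := py_bnd a b hb
    omega
  · exact absurd rfl hp
  · have bj := py_bnd j k' hk'
    have hYs : 3 ≤ Y s ∧ Y s ≤ 12 := by rw [Y_def]; omega

    have short : |Y t - Y s| ≤ 2 ∧
        (((p = .knight ∧ tok (E j) k' = 0) ∧ KnightStep s t) ∨
         ((p = .rook ∧ tok (E j) k' = 1) ∧ s ≠ t ∧ (X s = X t ∨ Y s = Y t) ∧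
          |X t - X s| ≤ 1 ∧ |Y t - Y s| ≤ 1) ∨
         ((p = .bishop ∧ tok (E j) k' = 2) ∧ s ≠ t ∧ |X t - X s| = |Y t - Y s| ∧
          |X t - X s| ≤ 1 ∧ |Y t - Y s| ≤ 1)) := by
      rcases hpk with ⟨rfl, h1⟩ | ⟨rfl, h1⟩ | ⟨rfl, h1⟩
      · have hk : KnightStep s t := hmv
        refine ⟨?_, Or.inl ⟨⟨rfl, h1⟩, hk⟩⟩
        rcases hk with h | h <;> omega
      · obtain ⟨⟨g1, g2⟩, g3⟩ := hmv
        have := slide I hn hYs (Or.inl g2) ht g3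
        exact ⟨by omega, Or.inr (Or.inl ⟨⟨rfl, h1⟩, g1, g2, this⟩)⟩
      · obtain ⟨⟨g1, g2⟩, g3⟩ := hmv
        have := slide I hn hYs (Or.inr g2) ht g3
        exact ⟨by omega, Or.inr (Or.inr ⟨⟨rfl, h1⟩, g1, g2, this⟩)⟩
    obtain ⟨sh, hcase⟩ := short
    rw [abs_le] at sh
    have hYt2 := Y_def t
    obtain ⟨i0, k, hi0, hk, t1, t2, h3⟩ := bd_none hn ht (by omega) (by omega)
    obtain rfl := I.full hi0 hk h3
    have dX : |X t - X s| = dn (px i0 k) (px j k') := by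
      rw [dn_abs, abs_sub_comm, X_def, X_def, s1, t1]
    have dY : |Y t - Y s| = dn (py i0 k) (py j k') := by
      rw [dn_abs, abs_sub_comm, Y_def, Y_def, s2, t2]
    have nz : s ≠ t → ¬ (dn (px i0 k) (px j k') = 0 ∧ dn (py i0 k) (py j k') = 0) := by
      rintro hne ⟨z1, z2⟩
      apply hne
      unfold dn at z1 z2
      ext <;> omega
    have hkd : kd (dn (px i0 k) (px j k')) (dn (py i0 k) (py j k')) = tok (E j) k' := by
      rcases hcase with ⟨⟨-, g⟩, g1⟩ | ⟨⟨-, g⟩, g1, g2, g3, g4⟩ | ⟨⟨-, g⟩, g1, g2, g3, g4⟩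
      · rw [g, kd0]
        unfold KnightStep at g1
        rw [dX, dY] at g1
        omega
      · rw [g, kd1]
        have := nz g1
        rw [dX] at g3
        rw [dY] at g4
        rcases g2 with g2 | g2
        · rw [g2, sub_self, abs_zero] at dX
          omega
        · rw [g2, sub_self, abs_zero] at dY
          omega
      · rw [g, kd2]
        have := nz g1
        omega
    have hne : tok (E j) k' ≠ 3 := by
      rcases hpk with ⟨-, h1⟩ | ⟨-, h1⟩ | ⟨-, h1⟩ <;> omega
    obtain ⟨E', F', i', h', w', I', hsw, hphi⟩ := closure I hj hk hk' h3 hne hkd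
    refine ⟨E', F', i', h', w', I', ?_, hphi⟩
    rw [swap_board hn hsw s1 s2 t1 t2] at hb
    rcases Q with ⟨qb, qc⟩
    have hb : qb = _ := hb
    have hto : qc = _ := hto
    rw [hb, hto]
    rfl

theorem back_black (hn : 40 ≤ n)
    {Q : Position n} (hQ : LegalMove (mk n m E kx .black) Q)
    (hM : MM Q.board = MM (bd n m E kx)) : ∃ kx', Q = mk n m E kx' .white := by
  obtain ⟨s, t, p, hs, hq, hmv, hb, hto, -⟩ := hQ
  have hs : bd n m E kx s = some (.black, p) := hs
  have hq : ∀ q, bd n m E kx t ≠ some (.black, q) := hq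
  have hmv : MovePattern (bd n m E kx) .black p s t := hmv
  have hb : Q.board = boardAfter (bd n m E kx) s t := hb
  rw [hb] at hM
  obtain ⟨ht, hp⟩ := (MM_move hs hq hmv).2.1 hM
  obtain ⟨rfl, a1, a2⟩ := bd_black hn hs
  obtain ⟨g1, g2, g3⟩ := hmv
  rw [Y_def, Y_def, abs_le] at g3
  have t2 : t.2.val = 0 := by
    by_contra h0
    rw [bd_low hn (by omega)] at ht
    simp at ht
  refine ⟨t.1.val, ?_⟩
  rw [king_board a1 a2 t2 rfl] at hb
  · rcases Q with ⟨qb, qc⟩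
    have hb : qb = _ := hb
    have hto : qc = _ := hto
    rw [hb, hto]
    rfl
  · intro h
    apply g1
    ext <;> omega

theorem lower (hn : 40 ≤ n) : ∀ (N : ℕ) (E F : ℕ → ℕ) (i h w kx : ℕ) (c : Color) (B : Position n),
    Inv m E F i h w → Steps N (mk n m E kx c) B → MM B.board = MM (bd n m E kx) →
    ∃ E' F' i' h' w' kx' c', Inv m E' F' i' h' w' ∧ B = mk n m E' kx' c' ∧
      |Phi m E' - Phi m E| ≤ N := by
  intro N
  induction N with
  | zero =>
    intro E F i h w kx c B I hst hM
    refine ⟨E, F, i, h, w, kx, c, I, ?_, by simp⟩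
    exact Eq.symm hst
  | succ N ih =>
    intro E F i h w kx c B I hst hM
    obtain ⟨C, h1, h2⟩ := hst
    have m1 : MM (bd n m E kx) ≤ MM C.board := MM_legal h1
    have m2 := MM_steps N h2
    have hC : MM C.board = MM (bd n m E kx) := by omega
    cases c
    · obtain ⟨E', F', i', h', w', I', rfl, hphi⟩ := back_white I hn h1 hC
      obtain ⟨E2, F2, i2, h2', w2, kx2, c2, I2, hB, hphi2⟩ :=
        ih E' F' i' h' w' kx .black B I' h2 (hM.trans hC.symm)
      refine ⟨E2, F2, i2, h2', w2, kx2, c2, I2, hB, ?_⟩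
      rw [abs_le] at *
      push_cast
      omega
    · obtain ⟨kx', rfl⟩ := back_black hn h1 hC
      obtain ⟨E2, F2, i2, h2', w2, kx2, c2, I2, hB, hphi2⟩ :=
        ih E F i h w kx' .white B I h2 (hM.trans hC.symm)
      refine ⟨E2, F2, i2, h2', w2, kx2, c2, I2, hB, ?_⟩
      push_cast
      omega

theorem sumd_congr {a b : ℕ} : ∀ N : ℕ, (∀ k < N, tok a k = tok b k) → sumd N a = sumd N b
  | 0, _ => rfl
  | N + 1, h => by
    simp only [sumd]
    rw [sumd_congr N (fun k hk => h k (by omega)), h N (by omega)]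

theorem Inv.sum {F : ℕ → ℕ} {i h w : ℕ} (I : Inv m E F i h w) {j : ℕ} (hj : j ≤ m) :
    sumd 22 (E j) = E j := by
  by_cases hji : j = i
  · subst hji
    have hh := I.hh
    rw [tH_kap] at hh
    rw [I.hE, Function.update_self]
    have := (chk_sum _ (kap_lt _)).2 (h, w) hh
    dsimp only at this
    exact this
  · rw [I.hE, Function.update_of_ne hji]
    obtain ⟨v, hv⟩ := I.hF j hj
    rw [tF_kap] at hv
    have := (chk_sum _ (kap_lt _)).1 (F j, v) hv
    dsimp only at this
    exact this

theorem phi_board (hn : 40 ≤ n) (hm : 8 * m + 11 < n) {F F' : ℕ → ℕ} {i h w i' h' w' kx' : ℕ}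
    (I : Inv m E F i h w) (I' : Inv m E' F' i' h' w')
    (hb : bd n m E kx = bd n m E' kx') : Phi m E = Phi m E' := by
  have key : ∀ j ≤ m, E j = E' j := by
    intro j hj
    rw [← I.sum hj, ← I'.sum hj]
    apply sumd_congr
    intro k hk
    have bj := py_bnd j k hk
    let s : Sq n := (⟨px j k, px_bnd k hk hj hm⟩, ⟨py j k, by omega⟩)
    have := congrFun hb s
    rw [bd_cell hn hj hk rfl rfl, bd_cell hn hj hk rfl rfl] at this
    exact pc_inj (tok_lt _ _) (tok_lt _ _) this
  unfold Phi
  apply Finset.sum_congr rfl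
  intro j hj
  rw [key j (by simp at hj; omega)]

theorem main_aux (hn : 40 ≤ n) (hm : 8 * (m + 1) + 11 < n) :
    ∃ A B : Position n, LegalPos A ∧ LegalPos B ∧ (∃ N : ℕ, Steps N A B) ∧
      ∀ N : ℕ, Steps N A B → 2 ^ (m + 1) ≤ N := by
  obtain ⟨N, kx', hk, hst, hM⟩ := exist_steps hn hm (reach_main (m + 1)) 0 (by norm_num)
  refine ⟨mk n (m + 1) startE 0 .white, mk n (m + 1) (endE (m + 1)) kx' .white,
    legal_mk hn (by omega) _, legal_mk hn (by omega) _, ⟨N, hst⟩, ?_⟩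
  intro N' hN'
  obtain ⟨E2, F2, i2, h2, w2, kx2, c2, I2, hB, hphi⟩ :=
    lower hn N' _ _ _ _ _ _ _ _ (inv_start (m + 1)) hN' hM
  have hbd : bd n (m + 1) (endE (m + 1)) kx' = bd n (m + 1) E2 kx2 :=
    congrArg Position.board hB
  have e := phi_board hn hm (inv_end m) I2 hbd
  rw [← e, Phi_diff m] at hphi
  have := (abs_le.1 hphi).2
  exact_mod_cast this
end

end Strip

open Chess in
/-- Main theorem.  There are a constant `c > 0` and an
integer `n₀` such that for every `n ≥ n₀` there is a pair `(A, B)` of legal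
positions of `n × n` chess such that some legal sequence of chess moves leads
from `A` to `B`, while every legal sequence of chess moves leading from `A` to
`B` has length at least `e^{c n}`.  Hence the minimum number of legal moves
required to get from `A` to `B` — and with it the diameter of `n × n` chess —
grows at least exponentially in `n`. -/
theorem statement11 :
    ∃ c : ℝ, 0 < c ∧ ∃ n₀ : ℕ, ∀ n : ℕ, n₀ ≤ n →
      ∃ A B : Position n, LegalPos A ∧ LegalPos B ∧
        (∃ N : ℕ, Steps N A B) ∧
        (∀ N : ℕ, Steps N A B → Real.exp (c * n) ≤ (N : ℝ)) := by

  refine ⟨Real.log 2 / 16, by positivity, 40, ?_⟩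
  intro n hn
  obtain ⟨A, B, hA, hB, hex, hlow⟩ :=
    Strip.main_aux (n := n) (m := (n - 12) / 8 - 1) hn (by omega)
  refine ⟨A, B, hA, hB, hex, ?_⟩
  intro N hN
  have h1 := hlow N hN
  set q := (n - 12) / 8 - 1 + 1 with hq
  have h2 : n ≤ 16 * q := by omega
  have h3 : Real.exp (Real.log 2 / 16 * n) ≤ Real.exp (Real.log 2 * q) := by
    apply Real.exp_le_exp.2
    have h4 : (n : ℝ) ≤ 16 * q := by exact_mod_cast h2
    have h5 : 0 < Real.log 2 := Real.log_pos (by norm_num)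
    nlinarith
  refine h3.trans ?_
  rw [mul_comm, Real.exp_nat_mul, Real.exp_log (by norm_num)]
  exact_mod_cast h1
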